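/- arXiv:2304.02315 — 12 statements merged into one kernel-verified Lean document; each statement's English description precedes it below -/
import Mathlib

section
/- Let n be a positive integer, let A and Z be real symmetric n×n matrices with A positive semidefinite, let A⁺ be the Moore–Penrose pseudoinverse of A, and let ε be a real number with 0 ≤ ε ≤ 1/2. If (1−ε)·A⁺ ⪯ Z ⪯ (1+ε)·A⁺, then for every vector b ∈ ℝⁿ, setting x = A⁺b and y = Zb, one has ‖x − y‖_A ≤ ε·‖x‖_A. -/
/-!
Put `D = P - Z`; the hypotheses say `-ε P ⪯ D ⪯ ε P`, and `P` is symmetric. Polarization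
(`two_mul_dotProduct_le`) turns this into `2 uᵀDv ≤ ε (uᵀPu + vᵀPv)` for all `u`, `v`. For
`w = D b`, take `u = A w` and `v = t b`. Since `A P A = A` and `P A P = P`, this reads
`2 t s ≤ ε (s + t² p)` with `s = ‖w‖_A²` and `p = bᵀPb = ‖P b‖_A²`. The choice `t = ε` gives
`s ≤ ε² p` when `ε > 0`, and `t = 1` gives `s ≤ 0` when `ε = 0`.
-/

open Matrix

/-- Polarized form of `-ε P ⪯ D ⪯ ε P`: apply the upper bound to `u + v` and the lower bound
to `u - v`; by the parallelogram law `P` need not be symmetric. -/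
lemma two_mul_dotProduct_le {n : ℕ} {D P : Matrix (Fin n) (Fin n) ℝ} {ε : ℝ} (hD : D.IsSymm)
    (hl : ∀ v : Fin n → ℝ, -(ε * (v ⬝ᵥ P *ᵥ v)) ≤ v ⬝ᵥ D *ᵥ v)
    (hu : ∀ v : Fin n → ℝ, v ⬝ᵥ D *ᵥ v ≤ ε * (v ⬝ᵥ P *ᵥ v)) (u v : Fin n → ℝ) :
    2 * (u ⬝ᵥ D *ᵥ v) ≤ ε * (u ⬝ᵥ P *ᵥ u + v ⬝ᵥ P *ᵥ v) := by
  have h1 := hu (u + v)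
  have h2 := hl (u - v)
  have hs : v ⬝ᵥ D *ᵥ u = u ⬝ᵥ D *ᵥ v := by
    rw [dotProduct_mulVec, ← mulVec_transpose, hD.eq, dotProduct_comm]
  simp only [mulVec_add, mulVec_sub, dotProduct_add, dotProduct_sub, add_dotProduct,
    sub_dotProduct, hs] at h1 h2
  linarith

/-- If `(1-ε)·A⁺ ⪯ Z ⪯ (1+ε)·A⁺` for a symmetric PSD matrix `A` with
Moore–Penrose pseudoinverse `A⁺ = P`, and `0 ≤ ε ≤ 1/2`, then for every `b`,
with `x = A⁺ b` and `y = Z b`, we have `‖x - y‖_A ≤ ε ‖x‖_A`. -/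
theorem approx_pseudoinverse_solve (n : ℕ) (hn : 0 < n)
    (A Z P : Matrix (Fin n) (Fin n) ℝ)
    (hA : A.IsSymm) (hZ : Z.IsSymm)
    (hApsd : A.PosSemidef)
    (hP1 : A * P * A = A) (hP2 : P * A * P = P)
    (hP3 : (A * P).IsSymm) (hP4 : (P * A).IsSymm)
    (ε : ℝ) (hε0 : 0 ≤ ε) (hε1 : ε ≤ 1 / 2)
    (hlow : (Z - (1 - ε) • P).PosSemidef)
    (hup : ((1 + ε) • P - Z).PosSemidef) :
    ∀ b : Fin n → ℝ,
      Real.sqrt ((P *ᵥ b - Z *ᵥ b) ⬝ᵥ (A *ᵥ (P *ᵥ b - Z *ᵥ b)))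
        ≤ ε * Real.sqrt ((P *ᵥ b) ⬝ᵥ (A *ᵥ (P *ᵥ b))) := by
  intro b
  have hP : P.IsSymm := by
    have h : ((1 + ε) • P - Z)ᵀ = (1 + ε) • P - Z := by
      simpa [conjTranspose_eq_transpose_of_trivial] using hup.isHermitian.eq
    rw [transpose_sub, transpose_smul, hZ.eq] at h
    exact smul_right_injective _ (by linarith : (1 + ε) ≠ 0) (sub_left_injective h)
  have hD : (P - Z).IsSymm := hP.sub hZ
  have hl : ∀ v : Fin n → ℝ, -(ε * (v ⬝ᵥ P *ᵥ v)) ≤ v ⬝ᵥ (P - Z) *ᵥ v := by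
    intro v
    have h := hup.dotProduct_mulVec_nonneg v
    simp only [star_trivial, sub_mulVec, smul_mulVec, dotProduct_sub, dotProduct_smul,
      smul_eq_mul] at h ⊢
    linarith
  have hu : ∀ v : Fin n → ℝ, v ⬝ᵥ (P - Z) *ᵥ v ≤ ε * (v ⬝ᵥ P *ᵥ v) := by
    intro v
    have h := hlow.dotProduct_mulVec_nonneg v
    simp only [star_trivial, sub_mulVec, smul_mulVec, dotProduct_sub, dotProduct_smul,
      smul_eq_mul] at h ⊢
    linarith
  have hx : (P *ᵥ b) ⬝ᵥ (A *ᵥ (P *ᵥ b)) = b ⬝ᵥ P *ᵥ b := by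
    rw [dotProduct_comm, dotProduct_mulVec, ← mulVec_transpose, hP.eq, mulVec_mulVec,
      mulVec_mulVec, hP2, dotProduct_comm]
  rw [hx, ← sub_mulVec]
  set w := (P - Z) *ᵥ b with hw
  have hAw : (A *ᵥ w) ⬝ᵥ P *ᵥ (A *ᵥ w) = w ⬝ᵥ A *ᵥ w := by
    rw [dotProduct_comm, dotProduct_mulVec, ← mulVec_transpose, hA.eq, mulVec_mulVec,
      mulVec_mulVec, hP1, dotProduct_comm]
  have key : ∀ t : ℝ, 2 * (t * (w ⬝ᵥ A *ᵥ w)) ≤ ε * (w ⬝ᵥ A *ᵥ w + t ^ 2 * (b ⬝ᵥ P *ᵥ b)) := by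
    intro t
    have h := two_mul_dotProduct_le hD hl hu (A *ᵥ w) (t • b)
    simp only [hAw, mulVec_smul, dotProduct_smul, smul_dotProduct, smul_eq_mul, ← hw] at h
    rw [dotProduct_comm (A *ᵥ w) w] at h
    linarith
  have hfin : w ⬝ᵥ A *ᵥ w ≤ ε ^ 2 * (b ⬝ᵥ P *ᵥ b) := by
    rcases hε0.eq_or_lt with h0 | h0
    · have h := key 1
      rw [← h0] at h ⊢
      linarith
    · refine le_of_mul_le_mul_left ?_ h0
      linarith [key ε]
  calc Real.sqrt (w ⬝ᵥ A *ᵥ w) ≤ Real.sqrt (ε ^ 2 * (b ⬝ᵥ P *ᵥ b)) := Real.sqrt_le_sqrt hfin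
    _ = ε * Real.sqrt (b ⬝ᵥ P *ᵥ b) := by
      rw [Real.sqrt_mul (sq_nonneg ε), Real.sqrt_sq hε0]
end

section
/- Let n be a positive integer, let A and Z be real symmetric n×n matrices with A positive semidefinite, let A⁺ be the Moore–Penrose pseudoinverse of A, and let ε be a real number with 0 ≤ ε ≤ 1/2. If (1−ε)·A⁺ ⪯ Z ⪯ (1+ε)·A⁺, then the matrix 2·A·Z·A − A·Z·A·Z·A − (1−ε²)·A·A⁺·A is positive semidefinite. -/
/-!
Put `F = (1+ε)P - Z` and `G = Z - (1-ε)P`, both positive semidefinite, so that with `D = Z - P`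
one has `F = εP - D` and `G = εP + D`. Since `APA = A`, the matrix in question is
`ε²A - ADADA`, a noncommutative version of `ε² - d²`. The scalar identity
`(ε+d)(ε-d)(ε+d) + (ε-d)(ε+d)(ε-d) = 2ε(ε² - d²)` becomes
`AGAFAGA + AFAGAFA = 2ε(ε²A - ADADA)`, and both summands on the left are congruences of `F`
and `G`. This settles `ε > 0`. For `ε = 0`, antisymmetry of the Loewner order gives `Z = P` and
the matrix vanishes.
-/

open Matrix

/-- If `(1-ε)·A⁺ ⪯ Z ⪯ (1+ε)·A⁺` for a symmetric PSD matrix `A` with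
Moore–Penrose pseudoinverse `A⁺ = P`, and `0 ≤ ε ≤ 1/2`, then
`2·A·Z·A − A·Z·A·Z·A − (1−ε²)·A·A⁺·A` is positive semidefinite. -/
theorem psd_combination (n : ℕ) (hn : 0 < n)
    (A Z P : Matrix (Fin n) (Fin n) ℝ)
    (hA : A.IsSymm) (hZ : Z.IsSymm)
    (hApsd : A.PosSemidef)
    (hP1 : A * P * A = A) (hP2 : P * A * P = P)
    (hP3 : (A * P).IsSymm) (hP4 : (P * A).IsSymm)
    (ε : ℝ) (hε0 : 0 ≤ ε) (hε1 : ε ≤ 1 / 2)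
    (hlow : (Z - (1 - ε) • P).PosSemidef)
    (hup : ((1 + ε) • P - Z).PosSemidef) :
    ((2 : ℝ) • (A * Z * A) - A * Z * A * Z * A
      - (1 - ε ^ 2) • (A * P * A)).PosSemidef := by
  -- `A * P * A = A` as a rewrite rule for right-associated products
  have h1 : A * (P * A) = A := by rw [← mul_assoc, hP1]
  rcases hε0.eq_or_lt with rfl | hε
  · have hZP : Z = P := by
      open scoped MatrixOrder in
      refine le_antisymm (Matrix.le_iff.mpr ?_) (Matrix.le_iff.mpr ?_)
      · simpa using hup
      · simpa using hlow
    have h0 : (2 : ℝ) • (A * Z * A) - A * Z * A * Z * A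
        - (1 - (0 : ℝ) ^ 2) • (A * P * A) = 0 := by
      rw [hZP]
      simp only [mul_assoc, h1]
      module
    rw [h0]
    exact PosSemidef.zero
  · have hAH : Aᴴ = A := hApsd.isHermitian
    have key : ∀ F G : Matrix (Fin n) (Fin n) ℝ, F.PosSemidef → G.PosSemidef →
        (A * G * A * F * A * G * A).PosSemidef := fun F G hF hG => by
      have h := hF.mul_mul_conjTranspose_same (A * G * A)
      have hGH : Gᴴ = G := hG.isHermitian
      simpa only [conjTranspose_mul, hAH, hGH, mul_assoc] using h
    have hsum := ((key _ _ hup hlow).add (key _ _ hlow hup)).smul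
      (show (0 : ℝ) ≤ (2 * ε)⁻¹ by positivity)
    convert hsum using 1
    rw [eq_inv_smul_iff₀ (by positivity)]
    simp only [mul_assoc, mul_sub, sub_mul, mul_smul_comm, smul_mul_assoc, h1]
    module
end

section
/- Let n be a positive integer, let A and Z be real symmetric n×n matrices with A positive semidefinite, let A⁺ be the Moore–Penrose pseudoinverse of A, and let ε be a real number with 0 ≤ ε ≤ 1/2. If (1−ε)·A⁺ ⪯ Z ⪯ (1+ε)·A⁺, then Z·A·Z − Z·A·A⁺ − A⁺·A·Z + A⁺ ⪯ ε²·A⁺. -/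
open Matrix

/-!
Put `E = Z - P`. Since `P A P = P`, the left-hand side of the claim is `E A E`. The hypotheses say
that `U = E + ε P` and `V = ε P - E` are positive semidefinite, and `U + V = 2ε P`.
As `0 ⪯ U, V ⪯ 2ε P`, the kernels of `U` and `V` contain the kernel of `P`, so `A P` acts on them
as an identity (`mul_mul_pinv_eq`). This gives `ε² P - E A E = U A V = V A U`, and
`2ε U A V = U A V A (U + V) = U A V A U + V A U A V`, a sum of congruences of positive
semidefinite matrices. The case `ε = 0` is degenerate: there `Z = P`.
-/

/-- If `U, V ⪰ 0` sum to a multiple of `P`, then `P y = 0` forces `U y = 0`; this is applied to the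
columns of `1 - A P`. -/
lemma mul_mul_pinv_eq {n : ℕ} {A P U V : Matrix (Fin n) (Fin n) ℝ} {c : ℝ}
    (hP2 : P * A * P = P) (hU : U.PosSemidef) (hV : V.PosSemidef) (hUV : U + V = c • P) :
    U * A * P = U := by
  have key : U * (1 - A * P) = 0 := by
    have hPQ : P * (1 - A * P) = 0 := by
      rw [mul_sub, mul_one, ← mul_assoc, hP2, sub_self]
    apply Matrix.ext_of_mulVec_single
    intro i
    rw [← mulVec_mulVec, zero_mulVec]
    set y := (1 - A * P) *ᵥ Pi.single i 1 with hy
    have hPy : P *ᵥ y = 0 := by rw [hy, mulVec_mulVec, hPQ, zero_mulVec]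
    have hsum : U *ᵥ y + V *ᵥ y = 0 := by
      rw [← add_mulVec, hUV, smul_mulVec, hPy, smul_zero]
    have h0 : star y ⬝ᵥ (U *ᵥ y) + star y ⬝ᵥ (V *ᵥ y) = 0 := by
      rw [← dotProduct_add, hsum, dotProduct_zero]
    have h1 := hU.dotProduct_mulVec_nonneg y
    have h2 := hV.dotProduct_mulVec_nonneg y
    exact (hU.dotProduct_mulVec_zero_iff y).1 (by linarith)
  rw [mul_sub, mul_one, ← mul_assoc, sub_eq_zero] at key
  exact key.symm

/-- If `(1-ε)·A⁺ ⪯ Z ⪯ (1+ε)·A⁺` for a symmetric PSD matrix `A` with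
Moore–Penrose pseudoinverse `A⁺ = P`, and `0 ≤ ε ≤ 1/2`, then
`Z·A·Z − Z·A·A⁺ − A⁺·A·Z + A⁺ ⪯ ε²·A⁺`. -/
theorem error_operator_bound (n : ℕ) (hn : 0 < n)
    (A Z P : Matrix (Fin n) (Fin n) ℝ)
    (hA : A.IsSymm) (hZ : Z.IsSymm)
    (hApsd : A.PosSemidef)
    (hP1 : A * P * A = A) (hP2 : P * A * P = P)
    (hP3 : (A * P).IsSymm) (hP4 : (P * A).IsSymm)
    (ε : ℝ) (hε0 : 0 ≤ ε) (hε1 : ε ≤ 1 / 2)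
    (hlow : (Z - (1 - ε) • P).PosSemidef)
    (hup : ((1 + ε) • P - Z).PosSemidef) :
    ((ε ^ 2) • P - (Z * A * Z - Z * A * P - P * A * Z + P)).PosSemidef := by
  obtain ⟨U, hUdef⟩ : ∃ U, U = Z - (1 - ε) • P := ⟨_, rfl⟩
  obtain ⟨V, hVdef⟩ : ∃ V, V = (1 + ε) • P - Z := ⟨_, rfl⟩
  rw [← hUdef] at hlow
  rw [← hVdef] at hup
  have hUV : U + V = (2 * ε) • P := by rw [hUdef, hVdef]; module
  have hZU : Z = U + (1 - ε) • P := by rw [hUdef]; module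
  have hUAP : U * A * P = U := mul_mul_pinv_eq hP2 hlow hup hUV
  rcases hε0.eq_or_lt with h0 | hpos
  · -- For `ε = 0` the sum `U + V` vanishes, so `U` and `-U` are both positive semidefinite.
    subst h0
    have hU0 : U = 0 := by
      have hneg : V = -U := by
        rw [mul_zero, zero_smul] at hUV
        exact (neg_eq_of_add_eq_zero_right hUV).symm
      rw [hneg] at hup
      apply Matrix.ext_of_mulVec_single
      intro i
      have h1 := hlow.dotProduct_mulVec_nonneg (Pi.single i 1)
      have h2 := hup.dotProduct_mulVec_nonneg (Pi.single i 1)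
      rw [neg_mulVec, dotProduct_neg] at h2
      rw [zero_mulVec]
      exact (hlow.dotProduct_mulVec_zero_iff _).1 (by linarith)
    have hZP : Z = P := by rw [hZU, hU0]; module
    rw [hZP, hP2]
    simpa using PosSemidef.zero
  · have hUT : Uᵀ = U := by simpa using hlow.isHermitian.eq
    have hVT : Vᵀ = V := by simpa using hup.isHermitian.eq
    have hAT : Aᵀ = A := hA
    have hPT : Pᵀ = P := by
      have h : ((2 * ε) • P)ᵀ = (2 * ε) • P := by
        rw [← hUV, transpose_add, hUT, hVT]
      rw [transpose_smul] at h
      exact smul_right_injective _ (by positivity : (2 * ε) ≠ 0) h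
    have hPAU : P * A * U = U := by
      have h := congrArg Matrix.transpose hUAP
      simpa only [transpose_mul, hUT, hAT, hPT, ← mul_assoc] using h
    have hVU : V = (2 * ε) • P - U := by rw [← hUV]; abel
    have hUAV : U * A * V = (2 * ε) • U - U * A * U := by
      rw [hVU, mul_sub, mul_smul_comm, hUAP]
    have hVAU : V * A * U = (2 * ε) • U - U * A * U := by
      rw [hVU, sub_mul, sub_mul, smul_mul_assoc, smul_mul_assoc, hPAU]
    have hgoal : (ε ^ 2) • P - (Z * A * Z - Z * A * P - P * A * Z + P) = U * A * V := by
      rw [hUAV, hZU]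
      simp only [add_mul, mul_add, smul_mul_assoc, mul_smul_comm, hUAP, hPAU, hP2]
      module
    have hsum : (2 * ε) • (U * A * V) = U * A * V * A * U + V * A * U * A * V := by
      rw [hVAU, ← hUAV, ← mul_add (U * A * V * A) U V, hUV, mul_smul_comm]
      congr 1
      rw [hUAV, sub_mul, sub_mul, smul_mul_assoc, smul_mul_assoc, hUAP,
        mul_assoc (U * A) U A, mul_assoc (U * A) (U * A) P, hUAP]
    have hpsd : (U * A * V * A * U + V * A * U * A * V).PosSemidef := by
      have h1 := hup.conjTranspose_mul_mul_same (A * U)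
      have h2 := hlow.conjTranspose_mul_mul_same (A * V)
      simp only [conjTranspose_eq_transpose_of_trivial, transpose_mul, hUT, hVT, hAT,
        ← mul_assoc] at h1 h2
      exact h1.add h2
    have hfin : U * A * V = (2 * ε)⁻¹ • (U * A * V * A * U + V * A * U * A * V) := by
      rw [← hsum, smul_smul, inv_mul_cancel₀ (by positivity), one_smul]
    rw [hgoal, hfin]
    exact hpsd.smul (by positivity)
end

section
/- Let G be a finite simple graph on vertex set V in which every vertex has even degree. Then there exists a relation D : V → V → Prop such that: for all u, v, G.Adj u v holds if and only if exactly one of D u v and D v u holds; and for every vertex v, the number of vertices u with D v u equals the number of vertices u with D u v. In other words, G admits an orientation in which every vertex has out-degree equal to its in-degree (a Eulerian orientation). -/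
/-!
Work with darts (edges together with a direction). Let `τ` be the reversal of darts. As every
degree is even, the darts leaving any given vertex can be paired up; let `σ` be the involution
exchanging the two darts of each pair. A Eulerian orientation is obtained from any set `S` of darts
that contains exactly one of `d`, `τ d` and exactly one of `d`, `σ d` for every dart `d`: the first
property says that `S` is an orientation, and by the second, `σ` exchanges the darts at `v` that are
in `S` with those that are not, the latter being the reversals of the edges oriented into `v`.

Such a set exists for any two fixed-point-free involutions of a type (`exists_common_transversal`).
An orbit of `π = σ τ` is mapped by both `σ` and `τ` onto one and the same orbit, and this orbit is a
different one (`not_sameCycle`), because `τ d = π ^ k d` would give a fixed point of a conjugate of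
`σ` or `τ`. So it suffices to choose one orbit out of each such pair.
-/

namespace EulerianOrientation

variable {α : Type*} {σ τ : Equiv.Perm α}

/-- Two steps of the exponent are removed at a time, by passing from `a` to `σ (τ a)`. -/
lemma ne_pow_apply (hσ : ∀ a, σ (σ a) = a) (hτ : ∀ a, τ (τ a) = a)
    (fσ : ∀ a, σ a ≠ a) (fτ : ∀ a, τ a ≠ a) :
    ∀ (k : ℕ) (a : α), τ a ≠ ((σ * τ) ^ k) a
  | 0, a => by simpa using fτ a
  | 1, a => by simpa using (fσ (τ a)).symm
  | k + 2, a => by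
    intro h
    apply ne_pow_apply hσ hτ fσ fτ k (σ (τ a))
    have e : (σ * τ) ^ (k + 2) = (σ * τ) * (σ * τ) ^ k * (σ * τ) := by
      rw [pow_succ, pow_succ']
    rw [e] at h
    simp only [Equiv.Perm.mul_apply] at h
    simpa only [hσ, hτ] using congrArg (fun x => τ (σ x)) h

lemma not_sameCycle (hσ : ∀ a, σ (σ a) = a) (hτ : ∀ a, τ (τ a) = a)
    (fσ : ∀ a, σ a ≠ a) (fτ : ∀ a, τ a ≠ a) (a : α) :
    ¬ (σ * τ).SameCycle a (τ a) := by
  rintro ⟨k, hk⟩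
  obtain ⟨n, rfl | rfl⟩ := k.eq_nat_or_neg
  · exact ne_pow_apply hσ hτ fσ fτ n a (by simpa using hk.symm)
  · apply ne_pow_apply hσ hτ fσ fτ n (τ a)
    rw [hτ, ← hk, zpow_neg, zpow_natCast, ← Equiv.Perm.mul_apply, mul_inv_cancel,
      Equiv.Perm.one_apply]

/-- Any two fixed-point-free involutions admit a common 2-colouring. -/
lemma exists_common_transversal (hσ : ∀ a, σ (σ a) = a) (hτ : ∀ a, τ (τ a) = a)
    (fσ : ∀ a, σ a ≠ a) (fτ : ∀ a, τ a ≠ a) :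
    ∃ S : α → Prop, (∀ a, S (τ a) ↔ ¬ S a) ∧ (∀ a, S (σ a) ↔ ¬ S a) := by
  let q : α → Quotient (Equiv.Perm.SameCycle.setoid (σ * τ)) := Quotient.mk _
  have hne (a : α) : q a ≠ q (τ a) := fun h =>
    not_sameCycle hσ hτ fσ fτ a (Quotient.exact h)
  have hπ (a : α) : q (σ (τ a)) = q a :=
    Quotient.sound (s := Equiv.Perm.SameCycle.setoid (σ * τ))
      (Equiv.Perm.SameCycle.symm ⟨1, by simp⟩)
  have h1 (a : α) : q (σ a) = q (τ a) := by simpa [hτ] using hπ (τ a)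
  have h2 (a : α) : q (τ (σ a)) = q a := by simpa [hτ, hσ] using (hπ (τ (σ a))).symm
  have key (a : α) : WellOrderingRel (q (τ a)) (q a) ↔ ¬ WellOrderingRel (q a) (q (τ a)) := by
    constructor
    · exact fun h h' => asymm h h'
    · intro h
      rcases trichotomous_of WellOrderingRel (q a) (q (τ a)) with h' | h' | h'
      · exact absurd h' h
      · exact absurd h' (hne a)
      · exact h'
  -- The orbit of `a` is chosen if it precedes its partner in some fixed linear order.
  refine ⟨fun a => WellOrderingRel (q a) (q (τ a)), fun a => ?_, fun a => ?_⟩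
  · simpa only [hτ] using key a
  · simpa only [h1, h2] using key a

lemma exists_involution_of_even_card {β : Type*} [Fintype β] (h : Even (Fintype.card β)) :
    ∃ f : β → β, (∀ b, f (f b) = b) ∧ ∀ b, f b ≠ b := by
  obtain ⟨k, hk⟩ := h
  have e : β ≃ Fin k × Bool := Fintype.equivOfCardEq (by simp [hk]; ring)
  refine ⟨fun b => e.symm ((e b).1, !(e b).2), fun b => by simp, fun b hb => ?_⟩
  have := congrArg (fun x => (e x).2) hb
  simp at this

end EulerianOrientation

open EulerianOrientation in
/-- Every finite simple graph in which all degrees are even admits a Eulerian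
orientation: a choice, for each edge, of exactly one direction, such that every
vertex has out-degree equal to in-degree. -/
theorem eulerian_orientation_simpleGraph {V : Type*} [Fintype V] [DecidableEq V]
    (G : SimpleGraph V) [DecidableRel G.Adj]
    (h : ∀ v, Even (G.degree v)) :
    ∃ D : V → V → Prop,
      (∀ u v, G.Adj u v ↔ Xor' (D u v) (D v u)) ∧
      (∀ v, Nat.card {u // D v u} = Nat.card {u // D u v}) := by
  have hf (v : V) : ∃ f : G.neighborSet v → G.neighborSet v,
      (∀ b, f (f b) = b) ∧ ∀ b, f b ≠ b :=
    exists_involution_of_even_card (by rw [G.card_neighborSet_eq_degree]; exact h v)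
  choose f hff hfne using hf
  let s : G.Dart → G.Dart := fun d => ⟨(d.fst, f d.fst ⟨d.snd, d.adj⟩), (f d.fst ⟨d.snd, d.adj⟩).2⟩
  have hs : Function.Involutive s := by
    rintro ⟨⟨u, v⟩, huv⟩
    simp [s, hff]
  have hsne (d : G.Dart) : s d ≠ d := fun hd =>
    hfne d.fst ⟨d.snd, d.adj⟩ (Subtype.ext (congrArg (fun x : G.Dart => x.snd) hd))
  have ht : Function.Involutive (SimpleGraph.Dart.symm : G.Dart → G.Dart) :=
    SimpleGraph.Dart.symm_involutive
  obtain ⟨S, hS₁, hS₂⟩ := exists_common_transversal (σ := hs.toPerm) (τ := ht.toPerm)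
    hs ht hsne (fun d => d.symm_ne)
  have hsymm (u v : V) (huv : G.Adj u v) : S ⟨(v, u), huv.symm⟩ ↔ ¬ S ⟨(u, v), huv⟩ :=
    hS₁ ⟨(u, v), huv⟩
  have hpair (v : V) (x : G.neighborSet v) :
      S ⟨(v, f v x), (f v x).2⟩ ↔ ¬ S ⟨(v, x), x.2⟩ := hS₂ ⟨(v, x), x.2⟩
  refine ⟨fun u v => ∃ huv : G.Adj u v, S ⟨(u, v), huv⟩, fun u v => ?_, fun v => ?_⟩
  · constructor
    · intro huv
      by_cases hu : S ⟨(u, v), huv⟩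
      · exact Or.inl ⟨⟨huv, hu⟩, fun ⟨_, h'⟩ => (hsymm u v huv).1 h' hu⟩
      · exact Or.inr ⟨⟨huv.symm, (hsymm u v huv).2 hu⟩, fun ⟨_, h'⟩ => hu h'⟩
    · rintro (⟨⟨h', _⟩, _⟩ | ⟨⟨h', _⟩, _⟩)
      · exact h'
      · exact h'.symm
  · refine Nat.card_congr
      { toFun := fun x => ⟨f v ⟨x.1, x.2.1⟩, (f v ⟨x.1, x.2.1⟩).2.symm, ?_⟩
        invFun := fun x => ⟨f v ⟨x.1, x.2.1.symm⟩, (f v ⟨x.1, x.2.1.symm⟩).2, ?_⟩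
        left_inv := fun x => Subtype.ext (by simp [hff])
        right_inv := fun x => Subtype.ext (by simp [hff]) }
    · obtain ⟨u, hu, hSu⟩ := x
      exact (hsymm v _ (f v ⟨u, hu⟩).2).2 fun h' => (hpair v ⟨u, hu⟩).1 h' hSu
    · obtain ⟨u, hu, hSu⟩ := x
      exact (hpair v ⟨u, hu.symm⟩).2 ((hsymm v u hu.symm).1 hSu)
end

section
/- Let V be a finite set, let E be a finite type, and let src, dst : E → V be functions (a finite directed multigraph). Suppose that for every vertex v ∈ V, the total degree |{e : src(e) = v}| + |{e : dst(e) = v}| is even. Then there exists a function σ : E → ℤ with σ(e) ∈ {1, −1} for every e, such that for every vertex v ∈ V, Σ_{e : src(e)=v} σ(e) = Σ_{e : dst(e)=v} σ(e). -/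
open Finset

/-!
The proof is by induction on the number of edges, over all pairs of endpoint maps at once. Let `e`
be an edge from `a` to `b`. If `a = b`, then `e` contributes nothing to any balance and can be
dropped. Otherwise, by parity, some other edge `f` is incident to `a`; let `c` be its other end.
Splicing `e` and `f` into a single edge between `b` and `c` lowers the degree of `a` by two and
leaves all other degrees alone. A balanced orientation of the smaller multigraph then lifts: the
spliced edge is traversed as a path through `a`, which adds nothing to the balance at `a`.
-/

/-- The induction, for the edges in a finset `s`, with the degree and the balance of a vertex
written as sums of indicators over `s`. -/
lemma exists_balanced_signing {V E : Type*} [DecidableEq V] [DecidableEq E] (s : Finset E) :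
    ∀ src dst : E → V,
      (∀ v, Even (∑ e ∈ s, ((if src e = v then 1 else 0) + (if dst e = v then 1 else 0) : ℤ))) →
      ∃ σ : E → ℤ, (∀ e, σ e = 1 ∨ σ e = -1) ∧
        ∀ v, ∑ e ∈ s, σ e * ((if src e = v then 1 else 0) - (if dst e = v then 1 else 0)) = 0 := by
  induction s using Finset.induction_on with
  | empty => exact fun _ _ _ => ⟨fun _ => 1, by simp, by simp⟩
  | insert e s hes ih =>
    intro src dst h
    simp only [sum_insert hes] at h ⊢
    by_cases hloop : src e = dst e
    · obtain ⟨σ, hσ, hbal⟩ := ih src dst fun v => by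
        have hv := h v
        rw [← hloop, Int.even_add] at hv
        exact hv.1 ⟨_, rfl⟩
      exact ⟨σ, hσ, fun v => by rw [hbal v, hloop]; simp⟩
    · -- If no other edge met `src e`, that vertex would have degree one.
      obtain ⟨f, hf, hfe⟩ : ∃ f ∈ s, src f = src e ∨ dst f = src e := by
        by_contra! hno
        have hv := h (src e)
        rw [sum_eq_zero fun f hf => by simp [hno f hf]] at hv
        simp [Ne.symm hloop] at hv
      obtain ⟨t, hft, rfl⟩ : ∃ t, f ∉ t ∧ insert f t = s :=
        ⟨s.erase f, notMem_erase f s, insert_erase hf⟩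
      have hfne : f ≠ e := fun hh => hes (hh ▸ hf)
      have hne : ∀ x ∈ t, x ≠ f := fun x hx hh => hft (hh ▸ hx)
      have hne' : ∀ x ∈ t, x ≠ e := fun x hx hh => hes (hh ▸ mem_insert_of_mem hx)
      simp only [sum_insert hft] at h ih ⊢
      -- The edge `f` is reused as the spliced edge: its end at `src e` is moved to `dst e`.
      rcases hfe with hfe | hfe
      · obtain ⟨σ, hσ, hbal⟩ := ih (Function.update src f (dst e)) dst fun v => by
          rw [sum_congr rfl fun x hx => by rw [Function.update_of_ne (hne x hx)]]
          have hv := h v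
          rw [hfe] at hv
          rw [Function.update_self]
          grind
        refine ⟨Function.update σ e (-σ f), fun x => ?_, fun v => ?_⟩
        · grind [Function.update_apply]
        · have hv := hbal v
          rw [sum_congr rfl fun x hx => by rw [Function.update_of_ne (hne x hx)],
            Function.update_self] at hv
          rw [sum_congr rfl fun x hx => by rw [Function.update_of_ne (hne' x hx)],
            Function.update_self, Function.update_of_ne hfne, hfe]
          linear_combination hv
      · obtain ⟨σ, hσ, hbal⟩ := ih src (Function.update dst f (dst e)) fun v => by
          rw [sum_congr rfl fun x hx => by rw [Function.update_of_ne (hne x hx)]]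
          have hv := h v
          rw [hfe] at hv
          rw [Function.update_self]
          grind
        refine ⟨Function.update σ e (σ f), fun x => ?_, fun v => ?_⟩
        · grind [Function.update_apply]
        · have hv := hbal v
          rw [sum_congr rfl fun x hx => by rw [Function.update_of_ne (hne x hx)],
            Function.update_self] at hv
          rw [sum_congr rfl fun x hx => by rw [Function.update_of_ne (hne' x hx)],
            Function.update_self, Function.update_of_ne hfne, hfe]
          linear_combination hv

/-- A finite directed multigraph in which every vertex has even total degree
admits a Eulerian reorientation: a signing `σ : E → {1, -1}` such that at every
vertex the signed out-flow equals the signed in-flow. -/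
theorem eulerian_orientation_multigraph {V E : Type*} [Fintype V] [DecidableEq V]
    [Fintype E] (src dst : E → V)
    (h : ∀ v : V, Even ((univ.filter fun e => src e = v).card
      + (univ.filter fun e => dst e = v).card)) :
    ∃ σ : E → ℤ, (∀ e, σ e = 1 ∨ σ e = -1) ∧
      ∀ v : V, ∑ e ∈ univ.filter (fun e => src e = v), σ e
        = ∑ e ∈ univ.filter (fun e => dst e = v), σ e := by
  classical
  obtain ⟨σ, hσ, hbal⟩ := exists_balanced_signing univ src dst fun v => by
    rw [sum_add_distrib, sum_boole, sum_boole]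
    exact_mod_cast h v
  refine ⟨σ, hσ, fun v => ?_⟩
  have hv := hbal v
  simp only [mul_sub, sum_sub_distrib, mul_ite, mul_one, mul_zero, ← sum_filter] at hv
  exact sub_eq_zero.1 hv
end

section
/- Let G be a finite simple graph in which every vertex has even degree. Then there exist finitely many closed walks c₁, …, c_k in G, each of which is a cycle (a closed walk with no repeated edges and no repeated vertices other than its endpoints), such that the edge sets of c₁, …, c_k are pairwise disjoint and their union is the entire edge set of G. -/
/-!
The proof peels off one cycle at a time. A nonempty finite graph without cycles has a vertex of
degree one, namely an endpoint of a longest path, so a graph with an edge and with all degrees even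
contains a cycle (`exists_isCycle_of_even`). A cycle uses zero or two edges at every vertex, so
deleting its edges keeps all degrees even (`even_ncard_sdiff_cycle`). The theorem follows by
well-founded induction on the graph, ordered by inclusion of edges.

Degrees are handled as `(G.neighborSet v).ncard`, so that no decidability instances have to be
carried through the induction.
-/

lemma exists_isCycle_of_even {V : Type*} [Finite V] {G : SimpleGraph V} (hG : G ≠ ⊥)
    (h : ∀ v, Even (G.neighborSet v).ncard) :
    ∃ (v : V) (c : G.Walk v v), c.IsCycle := by
  by_contra! hcyc
  have hac : G.IsAcyclic := fun v c => hcyc v c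
  obtain ⟨a, b, hab⟩ := SimpleGraph.ne_bot_iff_exists_adj.mp hG
  have : Nonempty V := ⟨a⟩
  obtain ⟨u, v, p, hp, hmax⟩ :=
    SimpleGraph.Walk.exists_isPath_forall_isPath_length_le_length G
  have hnil : ¬ p.Nil := by
    have := hmax _ _ hab.toWalk (SimpleGraph.Walk.IsPath.of_adj hab)
    rw [← SimpleGraph.Walk.length_eq_zero_iff]
    simp at this
    omega
  -- By maximality every neighbour of `u` lies on `p`; by acyclicity it is the second vertex.
  have hnb : G.neighborSet u = {p.snd} := by
    ext w
    simp only [SimpleGraph.mem_neighborSet, Set.mem_singleton_iff]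
    refine ⟨fun hadj => hac.eq_snd_of_adj_start hp hadj ?_, fun hw => hw ▸ p.adj_snd hnil⟩
    by_contra hw
    have := hmax _ _ (p.cons hadj.symm) (hp.cons hw)
    simp at this
  have := h u
  simp [hnb] at this

lemma even_ncard_sdiff_cycle {V : Type*} [Finite V] {G : SimpleGraph V}
    (h : ∀ v, Even (G.neighborSet v).ncard) {u : V} {c : G.Walk u u} (hc : c.IsCycle) (v : V) :
    Even ((G \ c.toSubgraph.spanningCoe).neighborSet v).ncard := by
  have hsub : c.toSubgraph.neighborSet v ⊆ G.neighborSet v := c.toSubgraph.neighborSet_subset v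
  have hEq : (G \ c.toSubgraph.spanningCoe).neighborSet v
      = G.neighborSet v \ c.toSubgraph.neighborSet v := rfl
  rw [hEq, Set.ncard_sdiff hsub]
  refine Even.tsub (h v) ?_
  by_cases hv : v ∈ c.support
  · rw [hc.ncard_neighborSet_toSubgraph_eq_two hv]
    exact even_two
  · have : c.toSubgraph.neighborSet v = ∅ := by
      ext w
      simp only [SimpleGraph.Subgraph.mem_neighborSet, Set.mem_empty_iff_false, iff_false]
      exact fun hw => hv (c.mem_verts_toSubgraph.mp hw.fst_mem)
    simp [this]

lemma exists_cycle_decomposition {V : Type*} [Finite V] (G : SimpleGraph V)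
    (h : ∀ v, Even (G.neighborSet v).ncard) :
    ∃ l : List ((v : V) × G.Walk v v),
      (∀ c ∈ l, c.2.IsCycle) ∧
      l.Pairwise (fun c d => ∀ e, e ∈ c.2.edges → e ∉ d.2.edges) ∧
      (∀ e, e ∈ G.edgeSet ↔ ∃ c ∈ l, e ∈ c.2.edges) := by
  induction G using WellFoundedLT.induction with
  | ind G ih =>
    by_cases hG : G = ⊥
    · subst hG
      exact ⟨[], by simp⟩
    obtain ⟨u, c, hc⟩ := exists_isCycle_of_even hG h
    have hle : G \ c.toSubgraph.spanningCoe ≤ G := sdiff_le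
    have hmem : ∀ e, e ∈ (G \ c.toSubgraph.spanningCoe).edgeSet ↔ e ∈ G.edgeSet ∧ e ∉ c.edges := by
      intro e
      rw [SimpleGraph.edgeSet_sdiff, SimpleGraph.Subgraph.edgeSet_spanningCoe, Set.mem_sdiff,
        c.mem_edges_toSubgraph]
    have hlt : G \ c.toSubgraph.spanningCoe < G := by
      refine lt_of_le_of_ne hle fun heq => ?_
      have hs : s(u, c.snd) ∈ c.edges := c.mk_start_snd_mem_edges hc.not_nil
      exact ((hmem _).mp (SimpleGraph.edgeSet_mono heq.ge (c.edges_subset_edgeSet hs))).2 hs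
    obtain ⟨l, hl₁, hl₂, hl₃⟩ := ih _ hlt (even_ncard_sdiff_cycle h hc)
    refine ⟨⟨u, c⟩ :: l.map (fun d => ⟨d.1, d.2.mapLe hle⟩), ?_, ?_, ?_⟩
    · simp only [List.mem_cons, List.mem_map]
      rintro d (rfl | ⟨d, hd, rfl⟩)
      · exact hc
      · exact (hl₁ d hd).mapLe hle
    · rw [List.pairwise_cons, List.pairwise_map]
      refine ⟨?_, ?_⟩
      · simp only [List.mem_map]
        rintro _ ⟨d, hd, rfl⟩ e he hed
        rw [SimpleGraph.Walk.edges_mapLe_eq_edges] at hed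
        exact ((hmem e).mp (d.2.edges_subset_edgeSet hed)).2 he
      · simpa only [SimpleGraph.Walk.edges_mapLe_eq_edges] using hl₂
    · intro e
      have := hl₃ e
      rw [hmem] at this
      have hce : e ∈ c.edges → e ∈ G.edgeSet := fun he => c.edges_subset_edgeSet he
      simp only [List.mem_cons, List.mem_map, exists_eq_or_imp, exists_exists_and_eq_and,
        SimpleGraph.Walk.edges_mapLe_eq_edges]
      rw [← this]
      tauto

/-- Veblen's theorem: a finite simple graph in which every vertex has even
degree decomposes into finitely many edge-disjoint cycles whose edge sets
together cover the entire edge set. -/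
theorem veblen_cycle_decomposition {V : Type*} [Fintype V] [DecidableEq V]
    (G : SimpleGraph V) [DecidableRel G.Adj]
    (h : ∀ v, Even (G.degree v)) :
    ∃ l : List ((v : V) × G.Walk v v),
      (∀ c ∈ l, c.2.IsCycle) ∧
      l.Pairwise (fun c d => ∀ e, e ∈ c.2.edges → e ∉ d.2.edges) ∧
      (∀ e, e ∈ G.edgeSet ↔ ∃ c ∈ l, e ∈ c.2.edges) := by
  refine exists_cycle_decomposition G fun v => ?_
  rw [Set.ncard_eq_toFinset_card']
  exact h v
end

section
/- Let n ≥ 3 and let C_n be the cycle graph on vertex set ℤ/nℤ, with i adjacent to i+1 for every i. Let M be a maximal matching of C_n, i.e., a set of edges no two of which share a vertex, such that every edge of C_n shares a vertex with some edge of M. Let S ⊆ ℤ/nℤ be any set obtained by choosing exactly one endpoint of each edge of M. Then |S| ≤ n/2, and for every i ∈ ℤ/nℤ at least one of the vertices i, i+1, i+2, i+3 belongs to S. -/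
/-!
The matched edges are pairwise disjoint two-element subsets of a set of `n` vertices, so
`2 * |S| ≤ 2 * |M| ≤ n`. For the second claim, maximality applied to the edge `{i + 1, i + 2}` gives
a matched edge `e` through `i + 1` or `i + 2`. Both endpoints of `e` then lie in
`{i, i + 1, i + 2, i + 3}`, whichever of them was chosen.
-/

/-- Choosing one endpoint of each edge of a maximal matching of the cycle graph
`C_n` (`n ≥ 3`) yields a set `S` with `|S| ≤ n/2` such that among any four
consecutive vertices `i, i+1, i+2, i+3` at least one belongs to `S`. -/
theorem maximal_matching_marking_cycle (n : ℕ) [NeZero n] (hn : 3 ≤ n)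
    (Cyc : SimpleGraph (ZMod n))
    (hCyc : ∀ u v : ZMod n, Cyc.Adj u v ↔ (u ≠ v ∧ (v = u + 1 ∨ u = v + 1)))
    (M : Finset (Sym2 (ZMod n)))
    (hME : ∀ e ∈ M, e ∈ Cyc.edgeSet)
    (hMdisj : ∀ e ∈ M, ∀ e' ∈ M, e ≠ e' → ∀ v : ZMod n, ¬(v ∈ e ∧ v ∈ e'))
    (hMmax : ∀ e ∈ Cyc.edgeSet, ∃ e' ∈ M, ∃ v : ZMod n, v ∈ e ∧ v ∈ e')
    (ch : Sym2 (ZMod n) → ZMod n) (hch : ∀ e ∈ M, ch e ∈ e)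
    (S : Finset (ZMod n)) (hS : S = M.image ch) :
    2 * S.card ≤ n ∧
      ∀ i : ZMod n, i ∈ S ∨ i + 1 ∈ S ∨ i + 2 ∈ S ∨ i + 3 ∈ S := by
  subst hS
  have near : ∀ e ∈ M, ∀ v ∈ e, ∀ w ∈ e, w = v ∨ w = v + 1 ∨ v = w + 1 := by
    intro e he v hv w hw
    have hE := hME e he
    induction e using Sym2.ind with
    | _ a b =>
      rw [SimpleGraph.mem_edgeSet, hCyc] at hE
      rw [Sym2.mem_iff] at hv hw
      grind
  refine ⟨?_, fun i => ?_⟩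
  · have hcard : (M.biUnion Sym2.toFinset).card = 2 * M.card := by
      rw [Finset.card_biUnion, Finset.sum_const_nat (m := 2), mul_comm]
      · intro e he
        exact Sym2.card_toFinset_of_not_isDiag e (Cyc.not_isDiag_of_mem_edgeSet (hME e he))
      · intro e he e' he' hne
        refine Finset.disjoint_left.mpr ?_
        intro v hv hv'
        rw [Sym2.mem_toFinset] at hv hv'
        exact hMdisj e he e' he' hne v ⟨hv, hv'⟩
    have hle := Finset.card_le_univ (M.biUnion Sym2.toFinset)
    rw [ZMod.card] at hle
    have himg : (M.image ch).card ≤ M.card := Finset.card_image_le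
    omega
  · -- `n ≥ 3` makes `1 ≠ 0` in `ZMod n`, so `{i + 1, i + 2}` is an edge.
    have : Fact (1 < n) := ⟨by omega⟩
    have hedge : s(i + 1, i + 2) ∈ Cyc.edgeSet := by
      rw [SimpleGraph.mem_edgeSet, hCyc]
      refine ⟨fun h => one_ne_zero (α := ZMod n) ?_, Or.inl (by ring)⟩
      linear_combination -h
    obtain ⟨e, he, v, hv, hve⟩ := hMmax _ hedge
    have hmem : ch e ∈ M.image ch := Finset.mem_image_of_mem ch he
    have key : ch e = i ∨ ch e = i + 1 ∨ ch e = i + 2 ∨ ch e = i + 3 := by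
      rw [Sym2.mem_iff] at hv
      have := near e he v hve (ch e) (hch e he)
      grind
    rcases key with h | h | h | h <;> rw [h] at hmem <;> tauto
end

section
/- Let V be a finite set, let E be a finite type with maps src, dst : E → V (a finite directed multigraph), let Δ > 0 be a real number, and let f : E → ℝ be such that f(e)/Δ is an integer for every e ∈ E. Suppose that for every vertex v ∈ V, the net flow Σ_{e : src(e)=v} f(e) − Σ_{e : dst(e)=v} f(e) is an integer multiple of 2Δ. Then for every vertex v ∈ V, the number of incidences of edges e with f(e)/Δ odd at v, counted as |{e : src(e) = v and f(e)/Δ is odd}| + |{e : dst(e) = v and f(e)/Δ is odd}|, is even. -/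
open Finset

/-!
Write `f e = g e * Δ` with `g` integer-valued. Cancelling `Δ` from the net-flow hypothesis, the
net flow of `g` at each vertex is even, so modulo 2 the out-sum and the in-sum of `g` add up to
zero. Modulo 2 each of these sums counts the edges with `g e` odd
(`natCast_card_filter_odd`), which is the claim.
-/

theorem natCast_card_filter_odd {E : Type*} (s : Finset E) (g : E → ℤ)
    [DecidablePred fun e => Odd (g e)] :
    ((s.filter fun e => Odd (g e)).card : ZMod 2) = ((∑ e ∈ s, g e : ℤ) : ZMod 2) := by
  rw [card_filter]
  push_cast
  refine sum_congr rfl fun e _ => ?_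
  split_ifs with h
  · exact ((ZMod.intCast_eq_one_iff_odd).2 h).symm
  · exact ((ZMod.intCast_eq_zero_iff_even).2 (Int.not_odd_iff_even.1 h)).symm

open scoped Classical in
/-- If every flow value `f(e)` is an integer multiple of `Δ` and every net flow
is an integer multiple of `2Δ`, then at every vertex the number of incidences of
edges whose value is an odd multiple of `Δ` is even. -/
theorem odd_edges_even_degree {V E : Type*} [Fintype V] [DecidableEq V] [Fintype E]
    (src dst : E → V) (Δ : ℝ) (hΔ : 0 < Δ) (f : E → ℝ)
    (hint : ∀ e, ∃ z : ℤ, f e = z * Δ)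
    (hnet : ∀ v : V, ∃ z : ℤ,
      (∑ e ∈ univ.filter (fun e => src e = v), f e)
        - (∑ e ∈ univ.filter (fun e => dst e = v), f e) = z * (2 * Δ)) :
    ∀ v : V,
      Even ((univ.filter fun e => src e = v ∧ ∃ z : ℤ, Odd z ∧ f e = z * Δ).card
        + (univ.filter fun e => dst e = v ∧ ∃ z : ℤ, Odd z ∧ f e = z * Δ).card) := by
  intro v
  choose g hg using hint
  have hodd : ∀ e, (∃ z : ℤ, Odd z ∧ f e = z * Δ) ↔ Odd (g e) := by
    intro e
    refine ⟨?_, fun h => ⟨g e, h, hg e⟩⟩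
    rintro ⟨z, hz, he⟩
    rw [hg e] at he
    have hgz : g e = z := by exact_mod_cast mul_right_cancel₀ hΔ.ne' he
    rwa [hgz]
  obtain ⟨z, hz⟩ := hnet v
  have hz' : (∑ e ∈ univ.filter (fun e => src e = v), g e)
      - (∑ e ∈ univ.filter (fun e => dst e = v), g e) = z * 2 := by
    simp only [hg, ← sum_mul, ← sub_mul, ← mul_assoc] at hz
    exact_mod_cast mul_right_cancel₀ hΔ.ne' hz
  have h2 := congrArg (Int.cast : ℤ → ZMod 2) hz'
  rw [Int.cast_sub, ← natCast_card_filter_odd, ← natCast_card_filter_odd, filter_filter,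
    filter_filter, Int.cast_mul, Int.cast_ofNat, show (2 : ZMod 2) = 0 from rfl, mul_zero,
    CharTwo.sub_eq_add] at h2
  simp only [hodd]
  rw [← ZMod.natCast_eq_zero_iff_even, Nat.cast_add]
  exact h2
end

section
/- Let V be a finite set, let E be a finite type with maps src, dst : E → V (a finite directed multigraph), let s, t ∈ V be distinct vertices, let Δ = 2^(−k) for some natural number k, and let f : E → ℝ be such that f(e) ≥ 0 and f(e)/Δ is an integer for every e ∈ E, and f is conserved at every vertex v ∉ {s, t}, i.e., Σ_{e : src(e)=v} f(e) = Σ_{e : dst(e)=v} f(e). Then there exists f' : E → ℝ with f'(e) ∈ {⌊f(e)⌋, ⌈f(e)⌉} for every e ∈ E, f' conserved at every vertex v ∉ {s, t}, and value(f') ≥ value(f), where value(g) := Σ_{e : src(e)=s} g(e) − Σ_{e : dst(e)=s} g(e). -/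
open Finset

/-!
Adding a return edge from `t` to `s` that carries the value of the flow turns `f` into a
circulation (conserved at every vertex), so it suffices to round a circulation to an integral one
within floors and ceilings without decreasing the value on one prescribed edge (`round_circ`).

For a circulation with a nonempty set `F` of non-integral edges, no vertex can meet exactly one end
of an edge of `F`, so the set `W` of vertices touched by `F` satisfies `2 |W| ≤ 2 |F|` by counting
degrees. The conservation constraints at `W` sum to zero, hence one of them is redundant, and at
most `|W| - 1 < |F|` linear constraints leave a nonzero circulation `d` supported on `F`
(`exists_direction`). Replacing `d` by `-d` if necessary, `d` is nonnegative on the prescribed edge.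
Moving from `f` along `d` until the first edge of `F` becomes integral (`exists_step`) stays within
floors and ceilings and decreases `|F|`; induct.
-/

/-- Conservation of `f` at every vertex of the multigraph. -/
def IsCirc {V E : Type*} [DecidableEq V] [Fintype E] (src dst : E → V) (f : E → ℝ) : Prop :=
  ∀ v : V, ∑ e ∈ univ.filter (fun e => src e = v), f e
    = ∑ e ∈ univ.filter (fun e => dst e = v), f e

open Classical in
/-- The finite set of edges on which `f` is not an integer. -/
noncomputable def fracSet {E : Type*} [Fintype E] (f : E → ℝ) : Finset E :=
  univ.filter (fun e => Int.fract (f e) ≠ 0)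

lemma mem_fracSet {E : Type*} [Fintype E] (f : E → ℝ) (e : E) :
    e ∈ fracSet f ↔ Int.fract (f e) ≠ 0 := by
  simp [fracSet]

open Classical in
/-- Modulo integers, only the non-integral edges contribute to a sum. -/
lemma sum_eq_frac_add_int {E : Type*} [Fintype E] (f : E → ℝ) (A : Finset E) :
    ∃ z : ℤ, ∑ e ∈ A, f e = ∑ e ∈ A ∩ fracSet f, f e + z := by
  refine ⟨∑ e ∈ A \ fracSet f, ⌊f e⌋, ?_⟩
  rw [← Finset.sum_inter_add_sum_sdiff A (fracSet f)]
  push_cast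
  congr 1
  refine Finset.sum_congr rfl fun e he => ?_
  have h : Int.fract (f e) = 0 := by
    by_contra h
    exact (Finset.mem_sdiff.1 he).2 ((mem_fracSet f e).2 h)
  have := Int.floor_add_fract (f e)
  linarith

open Classical in
/-- Two equal sums cannot have exactly one non-integral term between them. -/
lemma not_single {E : Type*} [Fintype E] (f : E → ℝ) (A B : Finset E)
    (h : ∑ e ∈ A, f e = ∑ e ∈ B, f e) (hA : #(A ∩ fracSet f) = 1)
    (hB : #(B ∩ fracSet f) = 0) : False := by
  obtain ⟨a, ha⟩ := Finset.card_eq_one.1 hA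
  rw [Finset.card_eq_zero] at hB
  obtain ⟨y, hy⟩ := sum_eq_frac_add_int f A
  obtain ⟨z, hz⟩ := sum_eq_frac_add_int f B
  rw [ha, Finset.sum_singleton] at hy
  rw [hB, Finset.sum_empty] at hz
  have hmem : a ∈ A ∩ fracSet f := by simp [ha]
  refine (mem_fracSet f a).1 (Finset.mem_inter.1 hmem).2 ?_
  have : f a = ((z - y : ℤ) : ℝ) := by push_cast; linarith
  rw [this, Int.fract_intCast]

open Classical in
/-- A circulation with a non-integral edge admits a nonzero circulation supported on its
non-integral edges. -/
lemma exists_direction {V E : Type*} [Fintype V] [DecidableEq V] [Fintype E]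
    (src dst : E → V) (f : E → ℝ) (hf : IsCirc src dst f) (hne : (fracSet f).Nonempty) :
    ∃ d : E → ℝ, IsCirc src dst d ∧ (∀ e, e ∉ fracSet f → d e = 0) ∧ ∃ e, d e ≠ 0 := by
  set F := fracSet f with hF
  set W : Finset V := F.image src ∪ F.image dst with hW
  have hdeg : ∀ v ∈ W, 2 ≤ #(F.filter (fun e => src e = v)) + #(F.filter (fun e => dst e = v)) := by
    intro v hv
    have hS : univ.filter (fun e => src e = v) ∩ F = F.filter (fun e => src e = v) := by
      ext e; simp [and_comm]
    have hD : univ.filter (fun e => dst e = v) ∩ F = F.filter (fun e => dst e = v) := by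
      ext e; simp [and_comm]
    have h1 := not_single f _ _ (hf v)
    have h2 := not_single f _ _ (hf v).symm
    rw [← hF, hS, hD] at h1 h2
    have h3 : 0 < #(F.filter (fun e => src e = v)) + #(F.filter (fun e => dst e = v)) := by
      rw [hW, Finset.mem_union, Finset.mem_image, Finset.mem_image] at hv
      rcases hv with ⟨e, he, hev⟩ | ⟨e, he, hev⟩
      · have : 0 < #(F.filter (fun e => src e = v)) :=
          Finset.card_pos.2 ⟨e, Finset.mem_filter.2 ⟨he, hev⟩⟩
        omega
      · have : 0 < #(F.filter (fun e => dst e = v)) :=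
          Finset.card_pos.2 ⟨e, Finset.mem_filter.2 ⟨he, hev⟩⟩
        omega
    by_contra hlt
    by_cases h0 : #(F.filter (fun e => dst e = v)) = 0
    · exact h1 (by omega) h0
    · exact h2 (by omega) (by omega)
  have hsS : #F = ∑ v ∈ W, #(F.filter (fun e => src e = v)) :=
    Finset.card_eq_sum_card_fiberwise fun e he =>
      Finset.mem_union_left _ (Finset.mem_image_of_mem src he)
  have hsD : #F = ∑ v ∈ W, #(F.filter (fun e => dst e = v)) :=
    Finset.card_eq_sum_card_fiberwise fun e he =>
      Finset.mem_union_right _ (Finset.mem_image_of_mem dst he)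
  have hcard : #W ≤ #F := by
    have := Finset.sum_le_sum hdeg
    rw [Finset.sum_add_distrib, ← hsS, ← hsD, Finset.sum_const, smul_eq_mul] at this
    omega
  obtain ⟨e₀, he₀⟩ := hne
  have hv₀ : src e₀ ∈ W := Finset.mem_union_left _ (Finset.mem_image_of_mem src he₀)
  -- Extension by zero of a function on `F`, followed by the net outflow at `W` minus one vertex.
  let ext : (F → ℝ) →ₗ[ℝ] (E → ℝ) :=
    { toFun := fun x e => if h : e ∈ F then x ⟨e, h⟩ else 0
      map_add' := by intro x y; ext e; by_cases h : e ∈ F <;> simp [h]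
      map_smul' := by intro c x; ext e; by_cases h : e ∈ F <;> simp [h] }
  let net : (E → ℝ) →ₗ[ℝ] ((W.erase (src e₀) : Finset V) → ℝ) :=
    { toFun := fun x v => ∑ e ∈ univ.filter (fun e => src e = v.1), x e
        - ∑ e ∈ univ.filter (fun e => dst e = v.1), x e
      map_add' := by intro x y; ext v; simp [Finset.sum_add_distrib]; ring
      map_smul' := by intro c x; ext v; simp [← Finset.mul_sum]; ring }
  have hker : LinearMap.ker (net ∘ₗ ext) ≠ ⊥ := by
    apply LinearMap.ker_ne_bot_of_finrank_lt
    rw [Module.finrank_fintype_fun_eq_card, Module.finrank_fintype_fun_eq_card,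
      Fintype.card_coe, Fintype.card_coe]
    exact lt_of_lt_of_le (Finset.card_erase_lt_of_mem hv₀) hcard
  obtain ⟨x, hx, hx0⟩ := Submodule.exists_mem_ne_zero_of_ne_bot hker
  have hsupp : ∀ e, e ∉ F → ext x e = 0 := fun e he => dif_neg he
  -- Conservation holds away from the dropped vertex.
  have hoff : ∀ v, v ≠ src e₀ → ∑ e ∈ univ.filter (fun e => src e = v), ext x e
      = ∑ e ∈ univ.filter (fun e => dst e = v), ext x e := by
    intro v hv
    by_cases hvW : v ∈ W
    · have := congrFun (LinearMap.mem_ker.1 hx) ⟨v, Finset.mem_erase.2 ⟨hv, hvW⟩⟩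
      exact sub_eq_zero.1 this
    · rw [Finset.sum_eq_zero, Finset.sum_eq_zero]
      · intro e he
        refine hsupp e fun heF => hvW ?_
        rw [← (Finset.mem_filter.1 he).2]
        exact Finset.mem_union_right _ (Finset.mem_image_of_mem dst heF)
      · intro e he
        refine hsupp e fun heF => hvW ?_
        rw [← (Finset.mem_filter.1 he).2]
        exact Finset.mem_union_left _ (Finset.mem_image_of_mem src heF)
  refine ⟨ext x, fun v => ?_, hsupp, ?_⟩
  · by_cases hv : v = src e₀
    · -- Each edge leaves one vertex and enters one vertex, so the net outflows sum to zero.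
      have htot : ∑ v, ∑ e ∈ univ.filter (fun e => src e = v), ext x e
          = ∑ v, ∑ e ∈ univ.filter (fun e => dst e = v), ext x e := by
        rw [Finset.sum_fiberwise, Finset.sum_fiberwise]
      rw [← Finset.add_sum_erase _ _ (Finset.mem_univ v),
        ← Finset.add_sum_erase _ _ (Finset.mem_univ v),
        Finset.sum_congr rfl fun u hu => hoff u (hv ▸ Finset.ne_of_mem_erase hu)] at htot
      exact add_right_cancel htot
    · exact hoff v hv
  · by_contra! hall
    refine hx0 (funext fun e => ?_)
    have h := hall e.1
    change (if h : e.1 ∈ F then x ⟨e.1, h⟩ else 0) = 0 at h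
    simpa using h

/-- Moving along a direction supported on the non-integral edges, up to the first time one of them
becomes integral. -/
lemma exists_step {E : Type*} [Fintype E] (f d : E → ℝ)
    (hsupp : ∀ e, e ∉ fracSet f → d e = 0) (hd : ∃ e, d e ≠ 0) :
    ∃ c : ℝ, 0 ≤ c ∧ (∀ e, (⌊f e⌋ : ℝ) ≤ f e + c * d e ∧ f e + c * d e ≤ ⌈f e⌉) ∧
      fracSet (fun e => f e + c * d e) ⊂ fracSet f := by
  classical
  -- The time at which edge `e` becomes integral.
  let τ : E → ℝ := fun e =>
    if 0 < d e then ((⌈f e⌉ : ℝ) - f e) / d e else (f e - ⌊f e⌋) / (-d e)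
  have hτ0 : ∀ e, 0 ≤ τ e := by
    intro e
    simp only [τ]
    split_ifs with h
    · exact div_nonneg (sub_nonneg.2 (Int.le_ceil _)) h.le
    · exact div_nonneg (sub_nonneg.2 (Int.floor_le _)) (by linarith)
  obtain ⟨e₁, he₁⟩ := hd
  obtain ⟨a, ha, hmin⟩ := Finset.exists_min_image (univ.filter (fun e => d e ≠ 0)) τ
    ⟨e₁, by simpa using he₁⟩
  have ha : d a ≠ 0 := by simpa using ha
  refine ⟨τ a, hτ0 a, fun e => ?_, ?_⟩
  · have hfl := Int.floor_le (f e)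
    have hce := Int.le_ceil (f e)
    by_cases hde : d e = 0
    · simp [hde, hfl, hce]
    have hle := hmin e (by simpa using hde)
    have hnn := hτ0 a
    rcases lt_or_gt_of_ne hde with hneg | hpos
    · have h1 : τ e = (f e - ⌊f e⌋) / (-d e) := if_neg (by linarith)
      rw [h1, le_div_iff₀ (by linarith)] at hle
      have : τ a * d e ≤ 0 := mul_nonpos_of_nonneg_of_nonpos hnn hneg.le
      constructor <;> linarith
    · have h1 : τ e = ((⌈f e⌉ : ℝ) - f e) / d e := if_pos hpos
      rw [h1, le_div_iff₀ hpos] at hle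
      have : 0 ≤ τ a * d e := mul_nonneg hnn hpos.le
      constructor <;> linarith
  · refine Finset.ssubset_iff_subset_ne.2 ⟨fun e he => ?_, fun heq => ?_⟩
    · by_contra hne
      rw [mem_fracSet] at he
      simp only [hsupp e hne, mul_zero, add_zero] at he
      exact hne ((mem_fracSet f e).2 he)
    · have haF : a ∈ fracSet f := by
        by_contra h
        exact ha (hsupp a h)
      rw [← heq, mem_fracSet] at haF
      apply haF
      rcases lt_or_gt_of_ne ha with hneg | hpos
      · have h1 : τ a = (f a - ⌊f a⌋) / (-d a) := if_neg (by linarith)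
        have : f a + τ a * d a = (⌊f a⌋ : ℝ) := by
          rw [h1]; field_simp; ring
        simp only [this, Int.fract_intCast]
      · have h1 : τ a = ((⌈f a⌉ : ℝ) - f a) / d a := if_pos hpos
        have : f a + τ a * d a = (⌈f a⌉ : ℝ) := by
          rw [h1]; field_simp; ring
        simp only [this, Int.fract_intCast]

lemma IsCirc.add_mul {V E : Type*} [DecidableEq V] [Fintype E] {src dst : E → V} {f d : E → ℝ}
    (hf : IsCirc src dst f) (hd : IsCirc src dst d) (c : ℝ) :
    IsCirc src dst (fun e => f e + c * d e) := by
  intro v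
  simp only [Finset.sum_add_distrib, ← Finset.mul_sum]
  rw [hf v, hd v]

/-- A circulation can be rounded to an integral circulation within floors and ceilings, without
decreasing the value on a prescribed edge `e₀`. -/
lemma round_circ {V E : Type*} [Fintype V] [DecidableEq V] [Fintype E]
    (src dst : E → V) (e₀ : E) (n : ℕ) : ∀ f : E → ℝ, #(fracSet f) = n → IsCirc src dst f →
    ∃ g : E → ℤ, IsCirc src dst (fun e => (g e : ℝ)) ∧
      (∀ e, ⌊f e⌋ ≤ g e ∧ g e ≤ ⌈f e⌉) ∧ f e₀ ≤ g e₀ := by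
  induction n using Nat.strong_induction_on with
  | _ n ih =>
    intro f hn hf
    rcases (fracSet f).eq_empty_or_nonempty with hem | hne
    · have hfl : ∀ e, (⌊f e⌋ : ℝ) = f e := by
        intro e
        have h : Int.fract (f e) = 0 := by
          by_contra h
          have := (mem_fracSet f e).2 h
          simp [hem] at this
        have := Int.floor_add_fract (f e)
        linarith
      refine ⟨fun e => ⌊f e⌋, ?_, fun e => ⟨le_rfl, Int.floor_le_ceil _⟩, (hfl e₀).ge⟩
      simpa only [hfl] using hf
    · obtain ⟨d, hd, hsupp, hd0, hpos⟩ : ∃ d : E → ℝ, IsCirc src dst d ∧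
          (∀ e, e ∉ fracSet f → d e = 0) ∧ (∃ e, d e ≠ 0) ∧ 0 ≤ d e₀ := by
        obtain ⟨d, hd, hsupp, hd0⟩ := exists_direction src dst f hf hne
        rcases le_total 0 (d e₀) with h | h
        · exact ⟨d, hd, hsupp, hd0, h⟩
        · refine ⟨fun e => -d e, fun v => ?_, fun e he => by simp [hsupp e he], ?_, by simpa⟩
          · simp only [Finset.sum_neg_distrib]
            rw [hd v]
          · simpa using hd0
      obtain ⟨c, hc, hbd, hlt⟩ := exists_step f d hsupp hd0
      obtain ⟨g, hg, hgb, hg0⟩ := ih _ (hn ▸ Finset.card_lt_card hlt) _ rfl (hf.add_mul hd c)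
      refine ⟨g, hg, fun e => ⟨?_, ?_⟩, ?_⟩
      · exact (Int.le_floor.2 (hbd e).1).trans (hgb e).1
      · exact (hgb e).2.trans (Int.ceil_le.2 (hbd e).2)
      · have := mul_nonneg hc hpos
        linarith

/-- Sums over the fibre of an edge map after adding one edge `none`. -/
lemma sum_option_filter {V E : Type*} [DecidableEq V] [Fintype E] (p : E → V) (u v : V)
    (g : Option E → ℝ) :
    ∑ e ∈ univ.filter (fun e : Option E => e.elim u p = v), g e
      = (if u = v then g none else 0) + ∑ e ∈ univ.filter (fun e => p e = v), g (some e) := by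
  rw [Finset.sum_filter, Finset.sum_filter, Fintype.sum_option]
  rfl

/-- Cohen's flow rounding theorem (existence version): an `s`-`t` flow whose
values are nonnegative integer multiples of `Δ = 2^(-k)` can be rounded
edge-by-edge to `⌊f(e)⌋` or `⌈f(e)⌉` while remaining a flow and not decreasing
the flow value. -/
theorem flow_rounding_exists {V E : Type*} [Fintype V] [DecidableEq V] [Fintype E]
    (src dst : E → V) (s t : V) (hst : s ≠ t)
    (k : ℕ) (Δ : ℝ) (hΔ : Δ = (2 : ℝ) ^ (-(k : ℤ)))
    (f : E → ℝ) (hf0 : ∀ e, 0 ≤ f e) (hint : ∀ e, ∃ z : ℤ, f e = z * Δ)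
    (hcons : ∀ v : V, v ≠ s → v ≠ t →
      ∑ e ∈ univ.filter (fun e => src e = v), f e
        = ∑ e ∈ univ.filter (fun e => dst e = v), f e) :
    ∃ f' : E → ℝ,
      (∀ e, f' e = (⌊f e⌋ : ℝ) ∨ f' e = (⌈f e⌉ : ℝ)) ∧
      (∀ v : V, v ≠ s → v ≠ t →
        ∑ e ∈ univ.filter (fun e => src e = v), f' e
          = ∑ e ∈ univ.filter (fun e => dst e = v), f' e) ∧
      ((∑ e ∈ univ.filter (fun e => src e = s), f e)
          - (∑ e ∈ univ.filter (fun e => dst e = s), f e)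
        ≤ (∑ e ∈ univ.filter (fun e => src e = s), f' e)
          - (∑ e ∈ univ.filter (fun e => dst e = s), f' e)) := by
  -- The edge `none` is the return edge from `t` to `s`, carrying the value of `f`.
  let F : Option E → ℝ := fun e => e.elim
    ((∑ e ∈ univ.filter (fun e => src e = s), f e)
      - (∑ e ∈ univ.filter (fun e => dst e = s), f e)) f
  have hF : IsCirc (fun e : Option E => e.elim t src) (fun e => e.elim s dst) F := by
    intro v
    rw [sum_option_filter, sum_option_filter]
    simp only [F, Option.elim]
    by_cases hvs : v = s
    · subst hvs
      rw [if_neg hst.symm, if_pos rfl]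
      ring
    by_cases hvt : v = t
    · subst hvt
      rw [if_neg hst, if_pos rfl]
      -- The net outflow at `t` is determined by the vanishing of the total net outflow.
      have htot : ∑ v, (∑ e ∈ univ.filter (fun e => src e = v), f e
          - ∑ e ∈ univ.filter (fun e => dst e = v), f e) = 0 := by
        rw [Finset.sum_sub_distrib, Finset.sum_fiberwise, Finset.sum_fiberwise, sub_self]
      rw [Fintype.sum_eq_add s v hst fun u hu => sub_eq_zero.2 (hcons u hu.1 hu.2)] at htot
      linarith
    · rw [if_neg (Ne.symm hvt), if_neg (Ne.symm hvs), hcons v hvs hvt]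
  obtain ⟨g, hg, hgb, hg0⟩ := round_circ _ _ none _ F rfl hF
  refine ⟨fun e => (g (some e) : ℝ), fun e => ?_, fun v hvs hvt => ?_, ?_⟩
  · have h1 : ⌊f e⌋ ≤ g (some e) := (hgb (some e)).1
    have h2 : g (some e) ≤ ⌈f e⌉ := (hgb (some e)).2
    have h3 := Int.ceil_le_floor_add_one (f e)
    have : g (some e) = ⌊f e⌋ ∨ g (some e) = ⌈f e⌉ := by omega
    exact this.imp (congrArg Int.cast) (congrArg Int.cast)
  · have h := hg v
    rw [sum_option_filter, sum_option_filter, if_neg (Ne.symm hvt), if_neg (Ne.symm hvs)] at h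
    simpa using h
  · have h := hg s
    rw [sum_option_filter, sum_option_filter, if_neg hst.symm, if_pos rfl] at h
    have h0 : (∑ e ∈ univ.filter (fun e => src e = s), f e)
      - (∑ e ∈ univ.filter (fun e => dst e = s), f e) ≤ (g none : ℝ) := hg0
    linarith
end

section
/- Let V be a finite set, let E be a finite type with maps src, dst : E → V (a finite directed multigraph), let s, t ∈ V be distinct vertices, let Δ = 2^(−k) for some natural number k, let c : E → ℕ be a cost function, and let f : E → ℝ be such that f(e) ≥ 0 and f(e)/Δ is an integer for every e ∈ E, f is conserved at every vertex v ∉ {s, t} (i.e., Σ_{e : src(e)=v} f(e) = Σ_{e : dst(e)=v} f(e)), and value(f) := Σ_{e : src(e)=s} f(e) − Σ_{e : dst(e)=s} f(e) is an integer. Then there exists f' : E → ℝ with f'(e) ∈ {⌊f(e)⌋, ⌈f(e)⌉} for every e ∈ E, f' conserved at every vertex v ∉ {s, t}, value(f') ≥ value(f), and Σ_{e∈E} c(e)·f'(e) ≤ Σ_{e∈E} c(e)·f(e). -/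
open Finset

/-!
The excess (outflow minus inflow) of `f` is an integer at every vertex: it vanishes away from `s`
and `t`, it is the value at `s`, and the excesses sum to zero, which settles `t`. The
rounding keeps every excess, and hence the value, exactly.

If some edges carry fractional flow, each vertex touched by such an edge is touched at least twice
(`two_le_card_fractional`), because a single fractional term cannot give an integral excess. So
there are at least as many fractional edges as touched vertices. The excess map from functions on
the fractional edges to functions on the touched vertices takes values in the proper subspace of
functions with sum zero, so it is not surjective and therefore has a nonzero kernel: there is a
nonzero circulation supported on fractional edges (`exists_circulation`). After a change of sign it
does not increase the cost. Moving `f` along it until the first edge becomes integral keeps every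
edge between its floor and ceiling and lowers the number of fractional edges
(`exists_step`); induction on this number finishes the proof.
-/

/-- Net flow out of the vertex `v`. -/
noncomputable def excess {V E : Type*} [DecidableEq V] [Fintype E] (src dst : E → V)
    (f : E → ℝ) (v : V) : ℝ :=
  (∑ e ∈ univ.filter (fun e => src e = v), f e) - ∑ e ∈ univ.filter (fun e => dst e = v), f e

/-- The integers, as an additive subgroup of `ℝ`. -/
noncomputable def realInts : AddSubgroup ℝ := (Int.castAddHom ℝ).range

lemma mem_realInts {x : ℝ} : x ∈ realInts ↔ ∃ z : ℤ, (z : ℝ) = x :=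
  AddMonoidHom.mem_range

open Classical in
/-- If a signed sum over edges is an integer, it cannot have exactly one fractional term. -/
lemma two_le_card_fractional {E : Type*} (f : E → ℝ) (S T : Finset E) (e₀ : E) (he₀ : e₀ ∈ S)
    (hfe₀ : f e₀ ∉ realInts) (h : ∑ e ∈ S, f e - ∑ e ∈ T, f e ∈ realInts) :
    2 ≤ #(S.filter (fun e => f e ∉ realInts)) + #(T.filter (fun e => f e ∉ realInts)) := by
  by_contra! hlt
  have hmem : e₀ ∈ S.filter (fun e => f e ∉ realInts) := by simp [he₀, hfe₀]
  have hpos := card_pos.2 ⟨e₀, hmem⟩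
  have hT : T.filter (fun e => f e ∉ realInts) = ∅ := card_eq_zero.1 (by omega)
  have hS := card_le_one.1 (show #(S.filter (fun e => f e ∉ realInts)) ≤ 1 by omega)
  have hTsum : ∑ e ∈ T, f e ∈ realInts := by
    refine sum_mem fun e he => ?_
    by_contra hc
    have : e ∈ T.filter (fun e => f e ∉ realInts) := by simp [he, hc]
    simp [hT] at this
  have hSsum : ∑ e ∈ S.erase e₀, f e ∈ realInts := by
    refine sum_mem fun e he => ?_
    by_contra hc
    exact (mem_erase.1 he).1 (hS e (by simp [(mem_erase.1 he).2, hc]) e₀ hmem)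
  rw [← add_sum_erase S f he₀] at h
  apply hfe₀
  have := realInts.add_mem (realInts.sub_mem h hSsum) hTsum
  convert this using 1
  ring

section

variable {V E : Type*} [DecidableEq V] [Fintype E] (src dst : E → V)

lemma excess_add_mul (f g : E → ℝ) (a : ℝ) (v : V) :
    excess src dst (fun e => f e + a * g e) v
      = excess src dst f v + a * excess src dst g v := by
  simp only [excess, sum_add_distrib, ← mul_sum]
  ring

lemma sum_excess [Fintype V] (f : E → ℝ) : ∑ v, excess src dst f v = 0 := by
  simp only [excess, sum_sub_distrib]
  rw [sum_fiberwise, sum_fiberwise, sub_self]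

open Classical in
/-- A flow with integral excesses and a fractional edge admits a nonzero circulation supported on
its fractional edges. -/
lemma exists_circulation (f : E → ℝ) (hf : ∀ v, excess src dst f v ∈ realInts)
    (e₀ : E) (he₀ : f e₀ ∉ realInts) :
    ∃ g : E → ℝ, (∃ e, g e ≠ 0) ∧ (∀ e, f e ∈ realInts → g e = 0) ∧
      ∀ v, excess src dst g v = 0 := by
  set F : Finset E := univ.filter (fun e => f e ∉ realInts) with hF
  set W : Finset V := F.image src ∪ F.image dst with hW
  have hsrc : ∀ e ∈ F, src e ∈ W := fun e he => mem_union_left _ (mem_image_of_mem _ he)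
  have hdst : ∀ e ∈ F, dst e ∈ W := fun e he => mem_union_right _ (mem_image_of_mem _ he)
  have hcard : #W ≤ #F := by
    have h1 := card_eq_sum_card_fiberwise hsrc
    have h2 := card_eq_sum_card_fiberwise hdst
    have h3 : ∑ w ∈ W, 2 ≤
        ∑ w ∈ W, (#(F.filter (fun e => src e = w)) + #(F.filter (fun e => dst e = w))) := by
      refine sum_le_sum fun w hw => ?_
      have key : ∀ p : E → V, F.filter (fun e => p e = w)
          = (univ.filter (fun e => p e = w)).filter (fun e => f e ∉ realInts) := by
        intro p; ext e; simp [hF, and_comm]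
      rw [key, key]
      rcases mem_union.1 hw with hw | hw <;> obtain ⟨e, he, rfl⟩ := mem_image.1 hw
      · exact two_le_card_fractional f _ _ e (by simp) (by simpa [hF] using he) (hf _)
      · rw [add_comm]
        refine two_le_card_fractional f _ _ e (by simp) (by simpa [hF] using he) ?_
        have := realInts.neg_mem (hf (dst e))
        rwa [excess, neg_sub] at this
    rw [sum_add_distrib, ← h1, ← h2] at h3
    simp at h3
    omega
  -- Extension by zero from the fractional edges.
  let ext0 : (F → ℝ) → E → ℝ := fun g e => if h : e ∈ F then g ⟨e, h⟩ else 0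
  let L : (F → ℝ) →ₗ[ℝ] (W → ℝ) :=
    { toFun := fun g w => excess src dst (ext0 g) w
      map_add' := by
        intro g h; ext w
        have := excess_add_mul src dst (ext0 g) (ext0 h) 1 w
        simp only [one_mul] at this
        rw [Pi.add_apply, ← this]
        congr 1; ext e; by_cases he : e ∈ F <;> simp [ext0, he]
      map_smul' := by
        intro a g; ext w
        have := excess_add_mul src dst 0 (ext0 g) a w
        have h0 : excess src dst (0 : E → ℝ) w = 0 := by simp [excess]
        rw [h0, zero_add] at this
        simp only [RingHom.id_apply, Pi.smul_apply, smul_eq_mul]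
        rw [← this]
        congr 1; ext e; by_cases he : e ∈ F <;> simp [ext0, he] }
  have hsupp : ∀ g e, e ∉ F → ext0 g e = 0 := fun g e he => by simp [ext0, he]
  have hfib : ∀ (p : E → V), (∀ e ∈ F, p e ∈ W) → ∀ g : F → ℝ,
      ∑ w ∈ W, ∑ e ∈ univ.filter (fun e => p e = w), ext0 g e = ∑ e ∈ F, ext0 g e := by
    intro p hp g
    rw [← sum_fiberwise_of_maps_to hp]
    refine sum_congr rfl fun w _ => (sum_subset ?_ ?_).symm
    · exact filter_subset_filter _ (subset_univ _)
    · intro e he he'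
      refine hsupp g e fun h => he' ?_
      simp only [mem_filter] at he ⊢
      exact ⟨h, he.2⟩
  have hLsum : ∀ g, ∑ w, L g w = 0 := by
    intro g
    have : ∑ w, L g w = ∑ w ∈ W, excess src dst (ext0 g) w :=
      sum_coe_sort W (fun w => excess src dst (ext0 g) w)
    rw [this]
    simp only [excess, sum_sub_distrib]
    rw [hfib src hsrc, hfib dst hdst, sub_self]
  have he₀F : e₀ ∈ F := by simp [hF, he₀]
  have hninj : ¬ Function.Injective L := by
    intro hinj
    have h1 := LinearMap.finrank_le_finrank_of_injective hinj
    have h2 : Module.finrank ℝ (F → ℝ) = Module.finrank ℝ (W → ℝ) := by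
      refine le_antisymm h1 ?_
      simpa using hcard
    have hsurj := (LinearMap.injective_iff_surjective_of_finrank_eq_finrank h2).1 hinj
    obtain ⟨g, hg⟩ := hsurj (Pi.single ⟨src e₀, hsrc e₀ he₀F⟩ 1)
    have := hLsum g
    rw [hg] at this
    simp at this
  rw [injective_iff_map_eq_zero] at hninj
  push Not at hninj
  obtain ⟨g, hg0, hgne⟩ := hninj
  refine ⟨ext0 g, ?_, ?_, ?_⟩
  · obtain ⟨e, he⟩ := Function.ne_iff.1 hgne
    exact ⟨e, by simpa [ext0] using he⟩
  · intro e he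
    exact hsupp g e (by simp [hF, he])
  · intro v
    by_cases hv : v ∈ W
    · exact congrFun hg0 ⟨v, hv⟩
    · -- No fractional edge touches a vertex outside `W`.
      have hz : ∀ (p : E → V), (∀ e ∈ F, p e ∈ W) →
          ∑ e ∈ univ.filter (fun e => p e = v), ext0 g e = 0 := by
        intro p hp
        refine sum_eq_zero fun e he => hsupp g e fun h => hv ?_
        rw [← (mem_filter.1 he).2]
        exact hp e h
      rw [excess, hz src hsrc, hz dst hdst, sub_self]

open Classical in
/-- One rounding step: at least one more edge becomes integral, excesses are kept, the cost does not
increase, and no edge leaves the interval between its floor and its ceiling. -/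
lemma exists_step_s12 (c f : E → ℝ) (hf : ∀ v, excess src dst f v ∈ realInts)
    (e₀ : E) (he₀ : f e₀ ∉ realInts) :
    ∃ f₁ : E → ℝ, (∀ e, (⌊f e⌋ : ℝ) ≤ f₁ e ∧ f₁ e ≤ ⌈f e⌉) ∧
      (∀ v, excess src dst f₁ v = excess src dst f v) ∧
      (∑ e, c e * f₁ e ≤ ∑ e, c e * f e) ∧
      univ.filter (fun e => f₁ e ∉ realInts) ⊂ univ.filter (fun e => f e ∉ realInts) := by
  obtain ⟨g, hne, hsupp, hcirc, hcost⟩ : ∃ g : E → ℝ, (∃ e, g e ≠ 0) ∧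
      (∀ e, f e ∈ realInts → g e = 0) ∧ (∀ v, excess src dst g v = 0) ∧
      ∑ e, c e * g e ≤ 0 := by
    obtain ⟨g, ⟨e, he⟩, h2, h3⟩ := exists_circulation src dst f hf e₀ he₀
    rcases le_total (∑ e, c e * g e) 0 with h | h
    · exact ⟨g, ⟨e, he⟩, h2, h3, h⟩
    · refine ⟨fun e => -g e, ⟨e, by simpa using he⟩, fun e he => by simp [h2 e he], ?_, ?_⟩
      · intro v
        have := h3 v
        simp only [excess, sum_neg_distrib] at this ⊢
        linarith
      · simpa using h
  -- `bd e` is the end of `[⌊f e⌋, ⌈f e⌉]` towards which `g` moves the edge `e`, reached at time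
  -- `(bd e - f e) / g e`.
  let bd : E → ℝ := fun e => if 0 < g e then ⌈f e⌉ else ⌊f e⌋
  obtain ⟨em, hem, hmin⟩ := exists_min_image (univ.filter (fun e => g e ≠ 0))
    (fun e => (bd e - f e) / g e) (by obtain ⟨e, he⟩ := hne; exact ⟨e, by simpa using he⟩)
  have hgem : g em ≠ 0 := by simpa using hem
  set ε := (bd em - f em) / g em with hε
  have hε0 : 0 ≤ ε := by
    rcases lt_or_gt_of_ne hgem with h | h
    · refine div_nonneg_of_nonpos ?_ h.le
      simp only [bd, not_lt.2 h.le, if_false]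
      linarith [Int.floor_le (f em)]
    · refine div_nonneg ?_ h.le
      simp only [bd, h, if_true]
      linarith [Int.le_ceil (f em)]
  have hem_int : f em + ε * g em ∈ realInts := by
    have : f em + ε * g em = bd em := by rw [hε]; field_simp; ring
    rw [this, mem_realInts]
    by_cases h : 0 < g em
    · exact ⟨⌈f em⌉, by simp [bd, h]⟩
    · exact ⟨⌊f em⌋, by simp [bd, h]⟩
  refine ⟨fun e => f e + ε * g e, ?_, ?_, ?_, ?_⟩
  · intro e
    have h1 := Int.floor_le (f e)
    have h2 := Int.le_ceil (f e)
    rcases lt_trichotomy (g e) 0 with h | h | h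
    · have hm := hmin e (by simp [h.ne])
      simp only [bd, not_lt.2 h.le, if_false] at hm
      rw [le_div_iff_of_neg h] at hm
      have := mul_nonpos_of_nonneg_of_nonpos hε0 h.le
      constructor <;> linarith
    · simp [h, h1, h2]
    · have hm := hmin e (by simp [h.ne'])
      simp only [bd, h, if_true] at hm
      rw [le_div_iff₀ h] at hm
      have := mul_nonneg hε0 h.le
      constructor <;> linarith
  · intro v
    rw [excess_add_mul, hcirc, mul_zero, add_zero]
  · have : ∑ e, c e * (f e + ε * g e) = ∑ e, c e * f e + ε * ∑ e, c e * g e := by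
      rw [mul_sum, ← sum_add_distrib]
      exact sum_congr rfl fun e _ => by ring
    rw [this]
    linarith [mul_nonpos_of_nonneg_of_nonpos hε0 hcost]
  · refine (ssubset_iff_of_subset ?_).2 ⟨em, ?_, ?_⟩
    · intro e he
      simp only [mem_filter, mem_univ, true_and] at he ⊢
      intro hfe
      exact he (by simpa [hsupp e hfe] using hfe)
    · simp only [mem_filter, mem_univ, true_and]
      exact fun h => hgem (hsupp em h)
    · simpa using hem_int

open Classical in
lemma exists_rounding (c : E → ℝ) (n : ℕ) : ∀ f : E → ℝ,
    #(univ.filter (fun e => f e ∉ realInts)) ≤ n →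
    (∀ v, excess src dst f v ∈ realInts) →
    ∃ f' : E → ℝ, (∀ e, f' e = (⌊f e⌋ : ℝ) ∨ f' e = (⌈f e⌉ : ℝ)) ∧
      (∀ v, excess src dst f' v = excess src dst f v) ∧
      ∑ e, c e * f' e ≤ ∑ e, c e * f e := by
  induction n with
  | zero =>
    intro f hn _
    refine ⟨f, fun e => ?_, fun _ => rfl, le_rfl⟩
    have he : f e ∈ realInts := by
      by_contra hc
      have : e ∈ univ.filter (fun e => f e ∉ realInts) := by simp [hc]
      rw [card_eq_zero.1 (Nat.le_zero.1 hn)] at this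
      simp at this
    obtain ⟨z, hz⟩ := mem_realInts.1 he
    left
    rw [← hz, Int.floor_intCast]
  | succ n ih =>
    intro f hn hf
    by_cases hall : ∀ e, f e ∈ realInts
    · exact ih f (by simp [hall]) hf
    push Not at hall
    obtain ⟨e₀, he₀⟩ := hall
    obtain ⟨f₁, hb, hex, hc, hss⟩ := exists_step_s12 src dst c f hf e₀ he₀
    have hlt := card_lt_card hss
    obtain ⟨f', hr, hex', hc'⟩ := ih f₁ (by omega) (fun v => by rw [hex]; exact hf v)
    refine ⟨f', fun e => ?_, fun v => (hex' v).trans (hex v), hc'.trans hc⟩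
    have h1 : ⌊f e⌋ ≤ ⌊f₁ e⌋ := Int.le_floor.2 (hb e).1
    have h2 : ⌈f₁ e⌉ ≤ ⌈f e⌉ := Int.ceil_le.2 (hb e).2
    have h3 := Int.floor_le_ceil (f₁ e)
    have h4 := Int.ceil_le_floor_add_one (f e)
    rcases hr e with h | h <;> rw [h] <;> norm_cast <;> omega

end

/-- Cost-aware version of Cohen's flow rounding theorem: an `s`-`t` flow with
integral total value whose edge values are integer multiples of `Δ = 2^(-k)`
can be rounded edge-by-edge to `⌊f(e)⌋` or `⌈f(e)⌉` while remaining a flow,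
not decreasing the value, and not increasing the cost. -/
theorem flow_rounding_with_costs {V E : Type*} [Fintype V] [DecidableEq V] [Fintype E]
    (src dst : E → V) (s t : V) (hst : s ≠ t)
    (k : ℕ) (Δ : ℝ) (hΔ : Δ = (2 : ℝ) ^ (-(k : ℤ)))
    (c : E → ℕ)
    (f : E → ℝ) (hf0 : ∀ e, 0 ≤ f e) (hint : ∀ e, ∃ z : ℤ, f e = z * Δ)
    (hcons : ∀ v : V, v ≠ s → v ≠ t →
      ∑ e ∈ univ.filter (fun e => src e = v), f e
        = ∑ e ∈ univ.filter (fun e => dst e = v), f e)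
    (hval : ∃ z : ℤ, (∑ e ∈ univ.filter (fun e => src e = s), f e)
      - (∑ e ∈ univ.filter (fun e => dst e = s), f e) = z) :
    ∃ f' : E → ℝ,
      (∀ e, f' e = (⌊f e⌋ : ℝ) ∨ f' e = (⌈f e⌉ : ℝ)) ∧
      (∀ v : V, v ≠ s → v ≠ t →
        ∑ e ∈ univ.filter (fun e => src e = v), f' e
          = ∑ e ∈ univ.filter (fun e => dst e = v), f' e) ∧
      ((∑ e ∈ univ.filter (fun e => src e = s), f e)
          - (∑ e ∈ univ.filter (fun e => dst e = s), f e)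
        ≤ (∑ e ∈ univ.filter (fun e => src e = s), f' e)
          - (∑ e ∈ univ.filter (fun e => dst e = s), f' e)) ∧
      (∑ e, (c e : ℝ) * f' e ≤ ∑ e, (c e : ℝ) * f e) := by
  have hs : excess src dst f s ∈ realInts := by
    obtain ⟨z, hz⟩ := hval
    exact mem_realInts.2 ⟨z, hz.symm⟩
  have h0 : ∀ v, v ≠ s → v ≠ t → excess src dst f v = 0 := fun v h1 h2 =>
    sub_eq_zero.2 (hcons v h1 h2)
  have hex : ∀ v, excess src dst f v ∈ realInts := by
    intro v
    by_cases h1 : v = s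
    · rwa [h1]
    by_cases h2 : v = t
    · have hsum := sum_excess src dst f
      rw [sum_eq_add s t hst (fun v _ hv => h0 v hv.1 hv.2) (by simp) (by simp)] at hsum
      rw [h2, eq_neg_of_add_eq_zero_right hsum]
      exact realInts.neg_mem hs
    · rw [h0 v h1 h2]
      exact realInts.zero_mem
  obtain ⟨f', hr, hex', hc⟩ := exists_rounding src dst (fun e => (c e : ℝ)) _ f le_rfl hex
  refine ⟨f', hr, fun v h1 h2 => ?_, (hex' s).ge, hc⟩
  exact sub_eq_zero.1 ((hex' v).trans (h0 v h1 h2))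
end

section
/- There exists a constant C > 0 such that for every positive integer n and every function d : Fin n → ℝ with d(i) > 0 for all i, there is a symmetric function w' : Fin n × Fin n → ℝ≥0 vanishing on the diagonal, with at most C·n unordered pairs {u,v} satisfying w'(u,v) > 0, such that (1/2)·L(w') ⪯ L(H(d)) ⪯ 2·L(w'), where H(d) is the complete graph on Fin n with weight d(u)·d(v) on each pair {u,v} with u ≠ v. -/
/-!
The product structure plays no role: the proof is the deterministic barrier argument of Batson,
Spielman and Srivastava, which sparsifies any connected weighted graph.

The Laplacian is a sum of rank-one forms, one for each edge. Adding the form of the all-ones vector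
makes the sum positive definite, and a change of basis makes it the identity,
`∑ i, v i (v i)ᵀ = 1` in dimension `n`. A matrix `A = ∑ i, s i • v i (v i)ᵀ` is built from `A = 0` by
adding one multiple `t • v i (v i)ᵀ` at a time. Two barriers `l < A < u` start at `-4n` and `5n` and
move up by `1` and `2` in each step, while the potentials `tr (A - l)⁻¹ ≤ 1/4` and
`tr (u - A)⁻¹ ≤ 1/5` are maintained (`BarrierBound`). A suitable `i` and `t` always exist by
averaging over `i`: this is `scalar_step`, stated in terms of eigenvalues, and `step_matrix`. After
`11n` steps the barriers are `7n` and `27n`, whose ratio is less than `4`, so a rescaling of `A`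
approximates the identity within a factor `2` (`exists_sparse_weights`).

The extra all-ones vector is harmless because Laplacian forms are invariant under subtracting the
mean, after which that vector contributes nothing.
-/

open Matrix

/-- The Laplacian matrix of a weight function `w` on a finite vertex set `V`:
`L(w)_{uu} = ∑_x w(u,x)` and `L(w)_{uv} = -w(u,v)` for `u ≠ v`. -/
def graphLaplacian {V : Type*} [Fintype V] [DecidableEq V] (w : V → V → ℝ) :
    Matrix V V ℝ :=
  Matrix.of fun u v => if u = v then ∑ x, w u x else -(w u v)

/-! ### One barrier step in a diagonalising basis -/

/-- The averaging argument. Here `a` lists the eigenvalues of the current matrix and `q i j` is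
the squared `j`-th coordinate of the `i`-th vector in an eigenbasis. Some vector `i` can be added
with a weight `t > 0` so that, after moving the upper barrier by `2` and the lower one by `1`,
neither potential exceeds its bound. The inequalities involving `t` are the potentials of the
updated matrix as given by the Sherman–Morrison formula.

The upper condition reads `U i ≤ t⁻¹` and the lower one `t⁻¹ ≤ L i`, where
`∑ i, U i ≤ 1/2 + 1/5 < 1 - 1/4 ≤ ∑ i, L i`. -/
lemma scalar_step {ι κ : Type*} [Fintype ι] [Fintype κ] [Nonempty κ]
    (q : ι → κ → ℝ) (hq0 : ∀ i j, 0 ≤ q i j) (hq1 : ∀ j, ∑ i, q i j = 1)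
    (a : κ → ℝ) (u l : ℝ) (hu : ∀ j, 0 < u - a j) (hl : ∀ j, 0 < a j - l)
    (hU : ∑ j, (u - a j)⁻¹ ≤ 1 / 5) (hL : ∑ j, (a j - l)⁻¹ ≤ 1 / 4) :
    (∀ j, 0 < a j - (l + 1)) ∧ ∃ i, ∃ t : ℝ, 0 < t ∧
      t * ∑ j, q i j * (u + 2 - a j)⁻¹ < 1 ∧
      ∑ j, (u + 2 - a j)⁻¹ + t * (∑ j, q i j * (u + 2 - a j)⁻¹ ^ 2) /
        (1 - t * ∑ j, q i j * (u + 2 - a j)⁻¹) ≤ 1 / 5 ∧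
      ∑ j, (a j - (l + 1))⁻¹ - t * (∑ j, q i j * (a j - (l + 1))⁻¹ ^ 2) /
        (1 + t * ∑ j, q i j * (a j - (l + 1))⁻¹) ≤ 1 / 4 := by
  -- the lower potential is below `1`, so every eigenvalue is at distance more than `1` from `l`
  have hl1 : ∀ j, 0 < a j - (l + 1) := by
    intro j
    have h1 : (a j - l)⁻¹ ≤ 1 / 4 :=
      (Finset.single_le_sum (f := fun j => (a j - l)⁻¹)
        (fun j _ => (inv_pos.2 (hl j)).le) (Finset.mem_univ j)).trans hL
    have h2 := mul_inv_cancel₀ (hl j).ne'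
    have h3 := hl j
    nlinarith
  refine ⟨hl1, ?_⟩
  set p : κ → ℝ := fun j => (u + 2 - a j)⁻¹ with hp
  set r : κ → ℝ := fun j => (u - a j)⁻¹ with hr
  set x : κ → ℝ := fun j => (a j - (l + 1))⁻¹ with hx
  set y : κ → ℝ := fun j => (a j - l)⁻¹ with hy
  have hp0 : ∀ j, 0 < p j := fun j => inv_pos.2 (by linarith [hu j])
  have hr0 : ∀ j, 0 < r j := fun j => inv_pos.2 (hu j)
  have hx0 : ∀ j, 0 < x j := fun j => inv_pos.2 (hl1 j)
  have hy0 : ∀ j, 0 < y j := fun j => inv_pos.2 (hl j)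
  have hrp : ∀ j, r j - p j = 2 * (r j * p j) := by
    intro j
    have := hu j
    have h2 : 0 < u + 2 - a j := by linarith
    simp only [hr, hp]; field_simp; ring
  have hxy : ∀ j, x j - y j = x j * y j := by
    intro j
    have := hl j
    have h2 := hl1 j
    simp only [hx, hy]; field_simp; ring
  set dU : ℝ := ∑ j, r j - ∑ j, p j with hdU
  set dL : ℝ := ∑ j, x j - ∑ j, y j with hdL
  have hdUle : 2 * ∑ j, p j ^ 2 ≤ dU := by
    rw [hdU, ← Finset.sum_sub_distrib, Finset.mul_sum]
    refine Finset.sum_le_sum fun j _ => ?_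
    have h1 := hrp j
    have h2 : p j ≤ r j := by nlinarith [mul_pos (hr0 j) (hp0 j)]
    nlinarith [hp0 j]
  have hdU0 : 0 < dU := by
    have : 0 < ∑ j, p j ^ 2 :=
      Finset.sum_pos (fun j _ => pow_pos (hp0 j) 2) Finset.univ_nonempty
    linarith
  have hdLeq : dL = ∑ j, x j * y j := by
    rw [hdL, ← Finset.sum_sub_distrib]
    exact Finset.sum_congr rfl fun j _ => hxy j
  have hdL0 : 0 < dL := by
    rw [hdLeq]
    exact Finset.sum_pos (fun j _ => mul_pos (hx0 j) (hy0 j)) Finset.univ_nonempty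
  have hcs : dL ^ 2 ≤ (∑ j, x j ^ 2 * y j) * ∑ j, y j := by
    rw [hdLeq]
    refine Finset.sum_sq_le_sum_mul_sum_of_sq_le_mul _ (fun j _ => ?_) (fun j _ => (hy0 j).le) ?_
    · exact (mul_pos (pow_pos (hx0 j) 2) (hy0 j)).le
    · intro j _; exact le_of_eq (by ring)
  have hx2 : ∑ j, x j ^ 2 = dL + ∑ j, x j ^ 2 * y j := by
    rw [hdLeq, ← Finset.sum_add_distrib]
    refine Finset.sum_congr rfl fun j _ => ?_
    linear_combination x j * hxy j
  have hLsum : 3 / 4 ≤ (∑ j, x j ^ 2) / dL - ∑ j, x j := by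
    have h0 : 0 ≤ ∑ j, x j ^ 2 * y j :=
      Finset.sum_nonneg fun j _ => (mul_pos (pow_pos (hx0 j) 2) (hy0 j)).le
    have h1 : dL ^ 2 ≤ ∑ j, x j ^ 2 * y j := by nlinarith
    have h2 : 1 + dL ≤ (∑ j, x j ^ 2) / dL := by
      rw [le_div_iff₀ hdL0, hx2]; nlinarith
    linarith
  have hUsum : (∑ j, p j ^ 2) / dU + ∑ j, p j ≤ 7 / 10 := by
    have h1 : (∑ j, p j ^ 2) / dU ≤ 1 / 2 := by
      rw [div_le_iff₀ hdU0]; linarith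
    linarith
  have hswap : ∀ f : κ → ℝ, ∑ i, ∑ j, q i j * f j = ∑ j, f j := by
    intro f
    rw [Finset.sum_comm]
    refine Finset.sum_congr rfl fun j _ => ?_
    rw [← Finset.sum_mul, hq1, one_mul]
  obtain ⟨i, -, hi⟩ : ∃ i ∈ Finset.univ,
      (∑ j, q i j * p j ^ 2) / dU + ∑ j, q i j * p j <
      (∑ j, q i j * x j ^ 2) / dL - ∑ j, q i j * x j := by
    apply Finset.exists_lt_of_sum_lt
    rw [Finset.sum_add_distrib, Finset.sum_sub_distrib, ← Finset.sum_div, ← Finset.sum_div,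
      hswap (fun j => p j ^ 2), hswap p, hswap (fun j => x j ^ 2), hswap x]
    linarith
  have hn : ∀ f : κ → ℝ, (∀ j, 0 ≤ f j) → 0 ≤ ∑ j, q i j * f j :=
    fun f hf => Finset.sum_nonneg fun j _ => mul_nonneg (hq0 i j) (hf j)
  have n1 := hn (fun j => p j ^ 2) (fun j => sq_nonneg _)
  have n2 := hn p (fun j => (hp0 j).le)
  have n3 := hn (fun j => x j ^ 2) (fun j => sq_nonneg _)
  have n4 := hn x (fun j => (hx0 j).le)
  set P2 := ∑ j, q i j * p j ^ 2
  set P1 := ∑ j, q i j * p j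
  set X2 := ∑ j, q i j * x j ^ 2
  set X1 := ∑ j, q i j * x j
  -- `t⁻¹` is the largest value for which the lower potential does not increase
  set T := X2 / dL - X1 with hT
  have hP2 : 0 ≤ P2 / dU := div_nonneg n1 hdU0.le
  have hT0 : 0 < T := by linarith
  refine ⟨i, T⁻¹, inv_pos.2 hT0, ?_, ?_, ?_⟩
  · rw [inv_mul_lt_iff₀ hT0]; linarith
  · have e : T⁻¹ * P2 / (1 - T⁻¹ * P1) = P2 / (T - P1) := by
      have : T - P1 ≠ 0 := by linarith
      have h' : 1 - T⁻¹ * P1 ≠ 0 := by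
        intro h; apply this; field_simp at h; linarith
      field_simp
    have h2 : P2 / (T - P1) ≤ dU := by
      have h3 : P2 / dU ≤ T - P1 := by linarith
      rw [div_le_iff₀ hdU0] at h3
      rw [div_le_iff₀ (by linarith)]; linarith
    rw [e]; linarith
  · have e : T⁻¹ * X2 / (1 + T⁻¹ * X1) = X2 / (T + X1) := by
      have : 0 < T + X1 := by linarith
      field_simp
    have h2 : X2 / (T + X1) = dL := by
      have h4 : T + X1 = X2 / dL := by rw [hT]; ring
      have h5 : 0 < X2 / dL := by linarith
      have h6 : X2 ≠ 0 := by rintro h; simp [h] at h5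
      rw [h4]; field_simp
    rw [e, h2]; linarith

/-- The Sherman–Morrison formula for a diagonal matrix, after taking traces. -/
lemma diag_rankOne_inv_trace {κ : Type*} [Fintype κ] [DecidableEq κ] (a v : κ → ℝ) (t : ℝ)
    (ha : ∀ j, 0 < a j) (ht : 1 + t * ∑ j, v j ^ 2 * (a j)⁻¹ ≠ 0) :
    (diagonal a + t • vecMulVec v v)⁻¹.trace =
      ∑ j, (a j)⁻¹ - t * (∑ j, v j ^ 2 * (a j)⁻¹ ^ 2) / (1 + t * ∑ j, v j ^ 2 * (a j)⁻¹) := by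
  set S := ∑ j, v j ^ 2 * (a j)⁻¹ with hS
  set c := t / (1 + t * S) with hc
  set p : κ → ℝ := fun j => (a j)⁻¹ * v j with hp
  have hcS : -c + t - t * c * S = 0 := by rw [hc]; field_simp; ring
  have hap : diagonal a *ᵥ p = v := by
    ext j; rw [mulVec_diagonal]; simp only [hp]
    rw [← mul_assoc, mul_inv_cancel₀ (ha j).ne', one_mul]
  have hvp : v ⬝ᵥ p = S := by
    simp only [dotProduct, hp, hS]; exact Finset.sum_congr rfl fun j _ => by ring
  have hvd : v ᵥ* diagonal (fun j => (a j)⁻¹) = p := by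
    ext j; rw [vecMul_diagonal]; simp only [hp]; ring
  have hinv : (diagonal a + t • vecMulVec v v)⁻¹ =
      diagonal (fun j => (a j)⁻¹) - c • vecMulVec p p := by
    apply inv_eq_right_inv
    have h1 : diagonal a * diagonal (fun j => (a j)⁻¹) = 1 := by
      rw [diagonal_mul_diagonal, ← diagonal_one]
      congr 1; ext j; exact mul_inv_cancel₀ (ha j).ne'
    rw [add_mul, mul_sub, mul_sub, h1, Matrix.smul_mul, Matrix.smul_mul, Matrix.mul_smul,
      Matrix.mul_smul, mul_vecMulVec, hap, vecMulVec_mul, hvd, vecMulVec_mul_vecMulVec, hvp]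
    ext i j
    simp only [Matrix.add_apply, Matrix.sub_apply, Matrix.smul_apply, vecMulVec_apply, smul_eq_mul,
      Pi.smul_apply]
    linear_combination (v i * p j) * hcS
  rw [hinv, trace_sub, trace_smul, trace_diagonal, trace_vecMulVec]
  have : p ⬝ᵥ p = ∑ j, v j ^ 2 * (a j)⁻¹ ^ 2 := by
    simp only [dotProduct, hp]; exact Finset.sum_congr rfl fun j _ => by ring
  rw [this, hc, smul_eq_mul]; ring

/-- By Cauchy–Schwarz, `t (v ⬝ᵥ x)²` is at most `t (∑ v²/a)` times `∑ a x²`. -/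
lemma diag_rankOne_posDef {κ : Type*} [Fintype κ] [DecidableEq κ] (a v : κ → ℝ) (t : ℝ)
    (ht0 : 0 ≤ t) (ha : ∀ j, 0 < a j) (ht : t * ∑ j, v j ^ 2 * (a j)⁻¹ < 1) :
    (diagonal a - t • vecMulVec v v).PosDef := by
  refine PosDef.of_dotProduct_mulVec_pos ?_ ?_
  · ext i j
    by_cases h : i = j
    · simp [h]
    · simp [vecMulVec_apply, h, Ne.symm h, mul_comm (v j)]
  · intro x hx
    have e : star x ⬝ᵥ (diagonal a - t • vecMulVec v v) *ᵥ x =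
        ∑ j, a j * x j ^ 2 - t * (∑ j, v j * x j) ^ 2 := by
      rw [sub_mulVec, dotProduct_sub, smul_mulVec, dotProduct_smul, vecMulVec_mulVec, star_trivial]
      congr 1
      · simp only [dotProduct, mulVec_diagonal]
        exact Finset.sum_congr rfl fun j _ => by ring
      · rw [dotProduct_smul, dotProduct_comm x v]
        simp [dotProduct, sq]
    rw [e]
    have hcs : (∑ j, v j * x j) ^ 2 ≤ (∑ j, v j ^ 2 * (a j)⁻¹) * ∑ j, a j * x j ^ 2 := by
      refine Finset.sum_sq_le_sum_mul_sum_of_sq_le_mul _ (fun j _ => ?_) (fun j _ => ?_)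
        (fun j _ => le_of_eq ?_)
      · exact mul_nonneg (sq_nonneg _) (inv_pos.2 (ha j)).le
      · exact mul_nonneg (ha j).le (sq_nonneg _)
      · have := (ha j).ne'; field_simp
    have hpos : 0 < ∑ j, a j * x j ^ 2 := by
      obtain ⟨j, hj⟩ := Function.ne_iff.1 hx
      refine Finset.sum_pos' (fun j _ => mul_nonneg (ha j).le (sq_nonneg _))
        ⟨j, Finset.mem_univ j, mul_pos (ha j) ?_⟩
      have hj' : x j ≠ 0 := hj
      positivity
    nlinarith [mul_le_mul_of_nonneg_left hcs ht0]

/-! ### The barrier invariant -/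

/-- The invariant of the construction: the spectrum of `A` lies strictly between `l` and `u`, the
upper potential `tr (uI - A)⁻¹` is at most `1/5` and the lower potential `tr (A - lI)⁻¹` is at most
`1/4`. -/
def BarrierBound {κ : Type*} [Fintype κ] [DecidableEq κ] (A : Matrix κ κ ℝ) (u l : ℝ) : Prop :=
  (u • (1 : Matrix κ κ ℝ) - A).PosDef ∧ (A - l • (1 : Matrix κ κ ℝ)).PosDef ∧
    (u • (1 : Matrix κ κ ℝ) - A)⁻¹.trace ≤ 1 / 5 ∧
    (A - l • (1 : Matrix κ κ ℝ))⁻¹.trace ≤ 1 / 4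

lemma posDef_trace_conj {κ : Type*} [Fintype κ] [DecidableEq κ] {V X : Matrix κ κ ℝ} {c : ℝ}
    (h1 : V * Vᵀ = 1) (hX : X.PosDef) (hc : X⁻¹.trace ≤ c) :
    (V * X * Vᵀ).PosDef ∧ (V * X * Vᵀ)⁻¹.trace ≤ c := by
  have h2 : Vᵀ * V = 1 := mul_eq_one_comm.1 h1
  constructor
  · have hV : IsUnit V := IsUnit.of_mul_eq_one _ h1
    exact (IsUnit.posDef_star_right_conjugate_iff hV).2 hX
  · have hXX : X * X⁻¹ = 1 := mul_nonsing_inv _ ((isUnit_iff_isUnit_det _).1 hX.isUnit)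
    have : (V * X * Vᵀ)⁻¹ = V * X⁻¹ * Vᵀ := by
      apply inv_eq_right_inv
      calc V * X * Vᵀ * (V * X⁻¹ * Vᵀ) = V * X * (Vᵀ * V) * X⁻¹ * Vᵀ := by
            simp only [Matrix.mul_assoc]
        _ = V * (X * X⁻¹) * Vᵀ := by rw [h2]; simp only [Matrix.mul_assoc, Matrix.mul_one]
        _ = 1 := by rw [hXX, Matrix.mul_one, h1]
    rw [this, trace_mul_cycle, h2, Matrix.one_mul]
    exact hc

lemma BarrierBound.conj {κ : Type*} [Fintype κ] [DecidableEq κ] {V A : Matrix κ κ ℝ} {u l : ℝ}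
    (h1 : V * Vᵀ = 1) (hA : BarrierBound A u l) : BarrierBound (V * A * Vᵀ) u l := by
  obtain ⟨a, b, c, d⟩ := hA
  obtain ⟨a', c'⟩ := posDef_trace_conj h1 a c
  obtain ⟨b', d'⟩ := posDef_trace_conj h1 b d
  have e1 : V * (u • (1 : Matrix κ κ ℝ) - A) * Vᵀ = u • (1 : Matrix κ κ ℝ) - V * A * Vᵀ := by
    rw [mul_sub, sub_mul, Matrix.mul_smul, Matrix.mul_one, Matrix.smul_mul, h1]
  have e2 : V * (A - l • (1 : Matrix κ κ ℝ)) * Vᵀ = V * A * Vᵀ - l • (1 : Matrix κ κ ℝ) := by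
    rw [mul_sub, sub_mul, Matrix.mul_smul, Matrix.mul_one, Matrix.smul_mul, h1]
  rw [e1] at a' c'
  rw [e2] at b' d'
  exact ⟨a', b', c', d'⟩

lemma step_diagonal {ι κ : Type*} [Fintype ι] [Fintype κ] [DecidableEq κ] [Nonempty κ]
    (v : ι → κ → ℝ) (hv : ∑ i, vecMulVec (v i) (v i) = 1) (a : κ → ℝ) (u l : ℝ)
    (h : BarrierBound (diagonal a) u l) :
    ∃ i, ∃ t : ℝ, 0 < t ∧
      BarrierBound (diagonal a + t • vecMulVec (v i) (v i)) (u + 2) (l + 1) := by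
  have hdu : ∀ u : ℝ, u • (1 : Matrix κ κ ℝ) - diagonal a = diagonal fun j => u - a j := by
    intro u; rw [smul_one_eq_diagonal, diagonal_sub]
  have hdl : ∀ l : ℝ, diagonal a - l • (1 : Matrix κ κ ℝ) = diagonal fun j => a j - l := by
    intro l; rw [smul_one_eq_diagonal, diagonal_sub]
  have htr : ∀ b : κ → ℝ, (∀ j, 0 < b j) → (diagonal b)⁻¹.trace = ∑ j, (b j)⁻¹ := by
    intro b hb
    have := diag_rankOne_inv_trace b 0 0 hb (by simp)
    simpa using this
  obtain ⟨h1, h2, h3, h4⟩ := h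
  rw [hdu] at h1 h3
  rw [hdl] at h2 h4
  rw [posDef_diagonal_iff] at h1 h2
  rw [htr _ h1] at h3
  rw [htr _ h2] at h4
  have hq1 : ∀ j, ∑ i, v i j ^ 2 = 1 := by
    intro j
    have := congrFun (congrFun hv j) j
    simpa [Matrix.sum_apply, vecMulVec_apply, sq] using this
  obtain ⟨hl1, i, t, ht, k1, k2, k3⟩ :=
    scalar_step (fun i j => v i j ^ 2) (fun i j => sq_nonneg _) hq1 a u l h1 h2 h3 h4
  have hu1 : ∀ j, 0 < u + 2 - a j := fun j => by linarith [h1 j]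
  have e1 : (u + 2) • (1 : Matrix κ κ ℝ) - (diagonal a + t • vecMulVec (v i) (v i)) =
      (diagonal fun j => u + 2 - a j) - t • vecMulVec (v i) (v i) := by
    rw [← hdu]; abel
  have e2 : diagonal a + t • vecMulVec (v i) (v i) - (l + 1) • (1 : Matrix κ κ ℝ) =
      (diagonal fun j => a j - (l + 1)) + t • vecMulVec (v i) (v i) := by
    rw [← hdl]; abel
  have hX : 0 ≤ ∑ j, v i j ^ 2 * (a j - (l + 1))⁻¹ :=
    Finset.sum_nonneg fun j _ => mul_nonneg (sq_nonneg _) (inv_pos.2 (hl1 j)).le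
  refine ⟨i, t, ht, ?_⟩
  unfold BarrierBound
  rw [e1, e2]
  refine ⟨diag_rankOne_posDef _ _ t ht.le hu1 k1, ?_, ?_, ?_⟩
  · refine (PosDef.diagonal hl1).add_posSemidef ?_
    have := (posSemidef_vecMulVec_self_star (v i)).smul ht.le
    simpa using this
  · have := diag_rankOne_inv_trace (fun j => u + 2 - a j) (v i) (-t) hu1 (by linarith)
    rw [sub_eq_add_neg, ← neg_smul, this]
    have e : ∀ x y z : ℝ, x - -t * y / (1 + -t * z) = x + t * y / (1 - t * z) := by
      intro x y z; rw [neg_mul, neg_mul, neg_div, sub_neg_eq_add, ← sub_eq_add_neg]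
    rw [e]
    exact k2
  · rw [diag_rankOne_inv_trace (fun j => a j - (l + 1)) (v i) t hl1
      (by have := mul_nonneg ht.le hX; linarith)]
    exact k3

lemma sum_vecMulVec_conj {ι κ : Type*} [Fintype ι] [Fintype κ] [DecidableEq κ]
    (V : Matrix κ κ ℝ) (v : ι → κ → ℝ) :
    ∑ i, vecMulVec (V *ᵥ v i) (V *ᵥ v i) = V * (∑ i, vecMulVec (v i) (v i)) * Vᵀ := by
  rw [Finset.mul_sum, Finset.sum_mul]
  refine Finset.sum_congr rfl fun i _ => ?_
  rw [mul_vecMulVec, vecMulVec_mul, vecMul_transpose]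

/-- One step of the construction, reduced to `step_diagonal` by rotating to an eigenbasis of `A`. -/
lemma step_matrix {ι κ : Type*} [Fintype ι] [Fintype κ] [DecidableEq κ] [Nonempty κ]
    (v : ι → κ → ℝ) (hv : ∑ i, vecMulVec (v i) (v i) = 1) (A : Matrix κ κ ℝ) (u l : ℝ)
    (h : BarrierBound A u l) :
    ∃ i, ∃ t : ℝ, 0 < t ∧ BarrierBound (A + t • vecMulVec (v i) (v i)) (u + 2) (l + 1) := by
  have hA : A.IsHermitian := by
    have h2 := h.2.1.isHermitian.add
      (isHermitian_one.smul (show IsSelfAdjoint l from IsSelfAdjoint.all l))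
    simpa using h2
  set V : Matrix κ κ ℝ := (hA.eigenvectorUnitary : Matrix κ κ ℝ) with hV
  have hstar : star V = Vᵀ := by
    rw [star_eq_conjTranspose, conjTranspose_eq_transpose_of_trivial]
  have hVV : V * Vᵀ = 1 := by
    rw [← hstar]; exact Unitary.coe_mul_star_self _
  have hVV' : Vᵀ * V = 1 := mul_eq_one_comm.1 hVV
  have hspec : A = V * diagonal hA.eigenvalues * Vᵀ := by
    conv_lhs => rw [hA.spectral_theorem]
    rw [Unitary.conjStarAlgAut_apply, ← hV, ← hstar]
    rfl
  have hdiag : Vᵀ * A * V = diagonal hA.eigenvalues := by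
    conv_lhs => rw [hspec]
    calc Vᵀ * (V * diagonal hA.eigenvalues * Vᵀ) * V
        = (Vᵀ * V) * diagonal hA.eigenvalues * (Vᵀ * V) := by simp only [Matrix.mul_assoc]
      _ = _ := by rw [hVV', Matrix.one_mul, Matrix.mul_one]
  have hD : BarrierBound (diagonal hA.eigenvalues) u l := by
    rw [← hdiag]
    have := h.conj (V := Vᵀ) (by rw [transpose_transpose, hVV'])
    rwa [transpose_transpose] at this
  obtain ⟨i, t, ht, hi⟩ := step_diagonal (fun i => Vᵀ *ᵥ v i)
    (by rw [sum_vecMulVec_conj, hv, Matrix.mul_one, transpose_transpose, hVV']) _ u l hD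
  refine ⟨i, t, ht, ?_⟩
  have := hi.conj hVV
  rwa [Matrix.mul_add, Matrix.add_mul, ← hspec, Matrix.mul_smul, Matrix.smul_mul, mul_vecMulVec,
    vecMulVec_mul, vecMul_transpose, mulVec_mulVec, hVV, one_mulVec] at this

/-- The barriers start at `5n` and `-4n`, where the zero matrix has potentials exactly `1/5` and
`1/4`. -/
lemma barrier_iterate {ι κ : Type*} [Fintype ι] [Fintype κ] [DecidableEq κ] [Nonempty κ]
    (v : ι → κ → ℝ) (hv : ∑ i, vecMulVec (v i) (v i) = 1) (k : ℕ) :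
    ∃ s : ι → ℝ, (∀ i, 0 ≤ s i) ∧ {i | s i ≠ 0}.ncard ≤ k ∧
      BarrierBound (∑ i, s i • vecMulVec (v i) (v i))
        (5 * Fintype.card κ + 2 * k) (-(4 * Fintype.card κ) + k) := by
  classical
  have hc : (0 : ℝ) < Fintype.card κ := by exact_mod_cast Fintype.card_pos
  induction k with
  | zero =>
    refine ⟨0, fun i => le_rfl, by simp, ?_⟩
    have e : ∀ c : ℝ, 0 < c → (c • (1 : Matrix κ κ ℝ)).PosDef ∧
        (c • (1 : Matrix κ κ ℝ))⁻¹.trace = Fintype.card κ * c⁻¹ := by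
      intro c hc
      refine ⟨PosDef.one.smul hc, ?_⟩
      have : (c • (1 : Matrix κ κ ℝ))⁻¹ = c⁻¹ • (1 : Matrix κ κ ℝ) := by
        apply inv_eq_right_inv
        rw [Matrix.smul_mul, Matrix.one_mul, smul_smul, mul_inv_cancel₀ hc.ne', one_smul]
      rw [this, trace_smul, trace_one, smul_eq_mul, mul_comm]
    obtain ⟨p1, t1⟩ := e (5 * Fintype.card κ) (by positivity)
    obtain ⟨p2, t2⟩ := e (4 * Fintype.card κ) (by positivity)
    have hz : ∑ i, (0 : ι → ℝ) i • vecMulVec (v i) (v i) = 0 := by simp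
    unfold BarrierBound
    rw [hz]
    simp only [Nat.cast_zero, mul_zero, add_zero, sub_zero, zero_sub, neg_smul, neg_neg]
    refine ⟨p1, p2, ?_, ?_⟩
    · rw [t1]; apply le_of_eq; field_simp
    · rw [t2]; apply le_of_eq; field_simp
  | succ k ih =>
    obtain ⟨s, s0, sc, hs⟩ := ih
    obtain ⟨i, t, ht, hi⟩ := step_matrix v hv _ _ _ hs
    refine ⟨s + Pi.single i t, ?_, ?_, ?_⟩
    · intro j
      have : (0 : ι → ℝ) ≤ Pi.single i t := Pi.single_nonneg.2 ht.le
      exact add_nonneg (s0 j) (this j)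
    · have hsub : {j | (s + Pi.single i t : ι → ℝ) j ≠ 0} ⊆ insert i {j | s j ≠ 0} := by
        intro j hj
        by_cases hji : j = i
        · exact Or.inl hji
        · right; simpa [hji] using hj
      refine (Set.ncard_le_ncard hsub (Set.toFinite _)).trans ?_
      exact (Set.ncard_insert_le _ _).trans (by omega)
    · have e : ∑ j, (s + Pi.single i t : ι → ℝ) j • vecMulVec (v j) (v j) =
          ∑ j, s j • vecMulVec (v j) (v j) + t • vecMulVec (v i) (v i) := by
        simp only [Pi.add_apply, add_smul, Finset.sum_add_distrib]
        congr 1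
        rw [Finset.sum_eq_single i]
        · simp
        · intro j _ hj; simp [hj]
        · simp
      rw [e]
      push_cast
      convert hi using 1 <;> ring

lemma quadForm_sum_vecMulVec {ι κ : Type*} [Fintype ι] [Fintype κ] (s : ι → ℝ) (b : ι → κ → ℝ)
    (x : κ → ℝ) :
    x ⬝ᵥ (∑ i, s i • vecMulVec (b i) (b i)) *ᵥ x = ∑ i, s i * (b i ⬝ᵥ x) ^ 2 := by
  rw [sum_mulVec, dotProduct_sum]
  refine Finset.sum_congr rfl fun i _ => ?_
  rw [smul_mulVec, dotProduct_smul, vecMulVec_mulVec, dotProduct_smul, dotProduct_comm x]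
  simp [sq]

/-! ### Sparsifying a sum of rank-one forms -/

/-- The Batson–Spielman–Srivastava theorem for a spanning family of vectors in dimension `n`: the
form `∑ (b i ⬝ᵥ x)²` is approximated within a factor `2` by a reweighting supported on `11 n`
indices. -/
theorem exists_sparse_weights {ι κ : Type*} [Fintype ι] [Fintype κ] [DecidableEq κ] [Nonempty κ]
    (b : ι → κ → ℝ) (hb : ∀ x : κ → ℝ, (∀ i, b i ⬝ᵥ x = 0) → x = 0) :
    ∃ s : ι → ℝ, (∀ i, 0 ≤ s i) ∧ {i | s i ≠ 0}.ncard ≤ 11 * Fintype.card κ ∧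
      ∀ x : κ → ℝ, 1 / 2 * ∑ i, s i * (b i ⬝ᵥ x) ^ 2 ≤ ∑ i, (b i ⬝ᵥ x) ^ 2 ∧
        ∑ i, (b i ⬝ᵥ x) ^ 2 ≤ 2 * ∑ i, s i * (b i ⬝ᵥ x) ^ 2 := by
  set M : Matrix κ κ ℝ := ∑ i, vecMulVec (b i) (b i) with hM
  have hMq : ∀ x : κ → ℝ, x ⬝ᵥ M *ᵥ x = ∑ i, (b i ⬝ᵥ x) ^ 2 := by
    intro x
    have := quadForm_sum_vecMulVec (fun _ => 1) b x
    simpa using this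
  have hMpos : M.PosDef := by
    refine PosDef.of_dotProduct_mulVec_pos ?_ ?_
    · exact (posSemidef_sum _ fun i _ => by
        simpa using posSemidef_vecMulVec_self_star (b i)).isHermitian
    · intro x hx
      rw [star_trivial, hMq]
      obtain ⟨i, hi⟩ : ∃ i, b i ⬝ᵥ x ≠ 0 := by
        by_contra! hcon; exact hx (hb x hcon)
      exact Finset.sum_pos' (fun i _ => sq_nonneg _) ⟨i, Finset.mem_univ i, by positivity⟩
  obtain ⟨B, hBu, hBM⟩ : ∃ B : Matrix κ κ ℝ, IsUnit B ∧ M = Bᵀ * B := by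
    open scoped MatrixOrder in
    obtain ⟨B, hB, h⟩ := CStarAlgebra.isStrictlyPositive_iff_eq_star_mul_self.mp
      hMpos.isStrictlyPositive
    exact ⟨B, hB, by rw [h, star_eq_conjTranspose, conjTranspose_eq_transpose_of_trivial]⟩
  have hBi : B * B⁻¹ = 1 := mul_nonsing_inv _ ((isUnit_iff_isUnit_det _).1 hBu)
  have hBi' : B⁻¹ * B = 1 := mul_eq_one_comm.1 hBi
  -- rescaling by `B⁻ᵀ` turns `∑ b bᵀ = BᵀB` into a decomposition of the identity
  set v : ι → κ → ℝ := fun i => (B⁻¹)ᵀ *ᵥ b i with hv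
  have hv1 : ∑ i, vecMulVec (v i) (v i) = 1 := by
    rw [hv, sum_vecMulVec_conj, ← hM, hBM, transpose_transpose]
    calc (B⁻¹)ᵀ * (Bᵀ * B) * B⁻¹ = (B * B⁻¹)ᵀ * (B * B⁻¹) := by
          rw [transpose_mul]; simp only [Matrix.mul_assoc]
      _ = 1 := by rw [hBi]; simp
  obtain ⟨s, s0, sc, hs⟩ := barrier_iterate v hv1 (11 * Fintype.card κ)
  have hc : (0 : ℝ) < Fintype.card κ := by exact_mod_cast Fintype.card_pos
  set N : ℝ := (Fintype.card κ : ℝ) with hN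
  have hvB : ∀ i x, v i ⬝ᵥ (B *ᵥ x) = b i ⬝ᵥ x := by
    intro i x
    rw [hv]
    simp only
    rw [mulVec_transpose, ← dotProduct_mulVec, mulVec_mulVec, hBi', one_mulVec]
  have hBB : ∀ x : κ → ℝ, (B *ᵥ x) ⬝ᵥ (B *ᵥ x) = ∑ i, (b i ⬝ᵥ x) ^ 2 := by
    intro x
    rw [← hMq, hBM, ← mulVec_mulVec, dotProduct_mulVec x, vecMul_transpose]
  have key : ∀ x : κ → ℝ, 7 * N * ∑ i, (b i ⬝ᵥ x) ^ 2 ≤ ∑ i, s i * (b i ⬝ᵥ x) ^ 2 ∧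
      ∑ i, s i * (b i ⬝ᵥ x) ^ 2 ≤ 27 * N * ∑ i, (b i ⬝ᵥ x) ^ 2 := by
    intro x
    have h1 := hs.1.posSemidef.dotProduct_mulVec_nonneg (B *ᵥ x)
    have h2 := hs.2.1.posSemidef.dotProduct_mulVec_nonneg (B *ᵥ x)
    rw [star_trivial, sub_mulVec, dotProduct_sub, quadForm_sum_vecMulVec, smul_mulVec, one_mulVec,
      dotProduct_smul, hBB, smul_eq_mul] at h1 h2
    simp only [hvB] at h1 h2
    push_cast at h1 h2
    rw [← hN] at h1 h2
    constructor <;> linarith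
  -- after `11 n` steps the barriers are `27 n` and `7 n`; dividing by `14 n` gives `27/14` and `1/2`
  refine ⟨fun i => s i / (14 * N), fun i => div_nonneg (s0 i) (by positivity), ?_, ?_⟩
  · have : {i | s i / (14 * N) ≠ 0} = {i | s i ≠ 0} := by
      ext i; simp [hc.ne']
    rw [this]; exact sc
  · intro x
    have e : ∑ i, s i / (14 * N) * (b i ⬝ᵥ x) ^ 2 = (∑ i, s i * (b i ⬝ᵥ x) ^ 2) / (14 * N) := by
      rw [Finset.sum_div]; exact Finset.sum_congr rfl fun i _ => by ring
    obtain ⟨k1, k2⟩ := key x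
    have hnn : 0 ≤ ∑ i, (b i ⬝ᵥ x) ^ 2 := Finset.sum_nonneg fun i _ => sq_nonneg _
    have hNn := mul_nonneg hc.le hnn
    rw [e]
    constructor
    · rw [← mul_div_assoc, div_le_iff₀ (by positivity)]
      linarith
    · rw [← mul_div_assoc, le_div_iff₀ (by positivity)]
      linarith

/-! ### Laplacians -/

lemma graphLaplacian_quadForm {V : Type*} [Fintype V] [DecidableEq V] (w : V → V → ℝ)
    (hs : ∀ u v, w u v = w v u) (h0 : ∀ u, w u u = 0) (x : V → ℝ) :
    x ⬝ᵥ graphLaplacian w *ᵥ x = 1 / 2 * ∑ u, ∑ v, w u v * (x u - x v) ^ 2 := by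
  have hrow : ∀ u, (graphLaplacian w *ᵥ x) u = ∑ v, w u v * (x u - x v) := by
    intro u
    have h1 : ∀ v, graphLaplacian w u v * x v =
        (if u = v then (∑ y, w u y) * x u else 0) - w u v * x v := by
      intro v
      by_cases h : u = v
      · subst h; simp [graphLaplacian, h0]
      · simp [graphLaplacian, h]
    simp only [mulVec, dotProduct, h1, mul_sub, Finset.sum_sub_distrib, Finset.sum_ite_eq,
      Finset.mem_univ, if_true, Finset.sum_mul]
  have hA : x ⬝ᵥ graphLaplacian w *ᵥ x = ∑ u, ∑ v, w u v * (x u * (x u - x v)) := by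
    simp only [dotProduct, hrow, Finset.mul_sum]
    exact Finset.sum_congr rfl fun u _ => Finset.sum_congr rfl fun v _ => by ring
  have hB : x ⬝ᵥ graphLaplacian w *ᵥ x = ∑ u, ∑ v, w u v * (x v * (x v - x u)) := by
    rw [hA, Finset.sum_comm]
    exact Finset.sum_congr rfl fun u _ => Finset.sum_congr rfl fun v _ => by rw [hs v u]
  have hC : ∑ u, ∑ v, w u v * (x u - x v) ^ 2 =
      ∑ u, ∑ v, w u v * (x u * (x u - x v)) + ∑ u, ∑ v, w u v * (x v * (x v - x u)) := by
    simp only [← Finset.sum_add_distrib]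
    exact Finset.sum_congr rfl fun u _ => Finset.sum_congr rfl fun v _ => by ring
  rw [hC, ← hA, ← hB]; ring

lemma graphLaplacian_isHermitian {V : Type*} [Fintype V] [DecidableEq V] (w : V → V → ℝ)
    (hs : ∀ u v, w u v = w v u) : (graphLaplacian w).IsHermitian := by
  ext u v
  by_cases h : u = v
  · simp [h]
  · simp [graphLaplacian, h, Ne.symm h, hs u v]

/-- Every product demand graph `H(d)` admits a `2`-approximate spectral
sparsifier with `O(n)` edges. -/
theorem product_demand_sparsifier :
    ∃ C : ℝ, 0 < C ∧ ∀ n : ℕ, 0 < n → ∀ d : Fin n → ℝ, (∀ i, 0 < d i) →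
      ∃ w' : Fin n → Fin n → ℝ,
        (∀ u v, w' u v = w' v u) ∧ (∀ u v, 0 ≤ w' u v) ∧ (∀ u, w' u u = 0) ∧
        ((Set.ncard {p : Sym2 (Fin n) | ∃ u v, p = s(u, v) ∧ 0 < w' u v} : ℝ) ≤ C * n) ∧
        (graphLaplacian (fun u v => if u = v then 0 else d u * d v)
            - (1 / 2 : ℝ) • graphLaplacian w').PosSemidef ∧
        ((2 : ℝ) • graphLaplacian w'
            - graphLaplacian (fun u v => if u = v then 0 else d u * d v)).PosSemidef := by
  refine ⟨11, by norm_num, fun n hn d hd => ?_⟩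
  have hn' : (n : ℝ) ≠ 0 := by exact_mod_cast hn.ne'
  have : Nonempty (Fin n) := ⟨⟨0, hn⟩⟩
  -- index `none` carries the all-ones vector, which makes the family span; the other indices are
  -- ordered pairs, so every edge occurs twice
  set b : Option (Fin n × Fin n) → Fin n → ℝ := fun o => o.elim (fun _ => 1) fun p =>
    Real.sqrt (d p.1 * d p.2) • (Pi.single p.1 1 - Pi.single p.2 1) with hb
  have hb0 : ∀ x, b none ⬝ᵥ x = ∑ i, x i := by intro x; simp [hb, dotProduct]
  have hb1 : ∀ p x, b (some p) ⬝ᵥ x = Real.sqrt (d p.1 * d p.2) * (x p.1 - x p.2) := by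
    intro p x; simp [hb, sub_dotProduct]
  have hb2 : ∀ p x, (b (some p) ⬝ᵥ x) ^ 2 = d p.1 * d p.2 * (x p.1 - x p.2) ^ 2 := by
    intro p x
    rw [hb1, mul_pow, Real.sq_sqrt (mul_pos (hd _) (hd _)).le]
  obtain ⟨s, s0, sc, hs⟩ := exists_sparse_weights b (by
    intro x hx
    have hconst : ∀ i j, x i = x j := by
      intro i j
      have := hx (some (i, j))
      rw [hb1, mul_eq_zero] at this
      rcases this with h | h
      · exact absurd h (Real.sqrt_pos.2 (mul_pos (hd _) (hd _))).ne'
      · exact sub_eq_zero.1 h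
    ext i
    have := hx none
    rw [hb0, Finset.sum_congr rfl fun j _ => hconst j i] at this
    simpa [hn'] using this)
  rw [Fintype.card_fin] at sc
  set w : Fin n → Fin n → ℝ := fun u v => if u = v then 0 else d u * d v with hw
  set w' : Fin n → Fin n → ℝ := fun u v =>
    if u = v then 0 else (s (some (u, v)) + s (some (v, u))) / 2 * (d u * d v) with hw'
  have wsym : ∀ u v, w u v = w v u := by
    intro u v; simp only [hw, eq_comm (a := u), mul_comm (d u)]
  have w'sym : ∀ u v, w' u v = w' v u := by
    intro u v; simp only [hw', eq_comm (a := u), mul_comm (d u), add_comm (s (some (u, v)))]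
  have w0 : ∀ u, w u u = 0 := by intro u; simp [hw]
  have w'0 : ∀ u, w' u u = 0 := by intro u; simp [hw']
  have qw : ∀ x : Fin n → ℝ, x ⬝ᵥ graphLaplacian w *ᵥ x =
      1 / 2 * ∑ p, (b (some p) ⬝ᵥ x) ^ 2 := by
    intro x
    rw [graphLaplacian_quadForm w wsym w0, Fintype.sum_prod_type]
    congr 1
    refine Finset.sum_congr rfl fun u _ => Finset.sum_congr rfl fun v _ => ?_
    rw [hb2]
    by_cases h : u = v
    · simp [h]
    · simp [hw, h]
  have qw' : ∀ x : Fin n → ℝ, x ⬝ᵥ graphLaplacian w' *ᵥ x =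
      1 / 2 * ∑ p, s (some p) * (b (some p) ⬝ᵥ x) ^ 2 := by
    intro x
    rw [graphLaplacian_quadForm w' w'sym w'0, Fintype.sum_prod_type]
    congr 1
    simp only [hb2]
    set F : Fin n → Fin n → ℝ := fun u v =>
      s (some (u, v)) * (d u * d v * (x u - x v) ^ 2) with hF
    have h1 : ∀ u v, w' u v * (x u - x v) ^ 2 = 1 / 2 * F u v + 1 / 2 * F v u := by
      intro u v
      by_cases h : u = v
      · simp [h, hF]
      · simp only [hw', h, hF, if_false]; ring
    simp only [h1, Finset.sum_add_distrib]
    rw [Finset.sum_comm (f := fun u v => 1 / 2 * F v u)]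
    simp only [← Finset.mul_sum]
    ring
  -- subtracting the mean of `x` kills the extra vector and leaves the edge terms unchanged
  have key : ∀ x : Fin n → ℝ,
      1 / 2 * (x ⬝ᵥ graphLaplacian w' *ᵥ x) ≤ x ⬝ᵥ graphLaplacian w *ᵥ x ∧
      x ⬝ᵥ graphLaplacian w *ᵥ x ≤ 2 * (x ⬝ᵥ graphLaplacian w' *ᵥ x) := by
    intro x
    set y : Fin n → ℝ := fun i => x i - (∑ j, x j) / n with hy
    have y0 : b none ⬝ᵥ y = 0 := by
      rw [hb0]; simp only [hy, Finset.sum_sub_distrib, Finset.sum_const, Finset.card_univ,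
        Fintype.card_fin, nsmul_eq_mul]
      field_simp; ring
    have y1 : ∀ p, b (some p) ⬝ᵥ y = b (some p) ⬝ᵥ x := by
      intro p; rw [hb1, hb1]; simp only [hy]; ring
    have := hs y
    simp only [Fintype.sum_option, y0, y1] at this
    rw [qw, qw']
    constructor <;> linarith [this.1, this.2]
  have hLw := graphLaplacian_isHermitian w wsym
  have hLw' := graphLaplacian_isHermitian w' w'sym
  refine ⟨w', w'sym, ?_, w'0, ?_, ?_, ?_⟩
  · intro u v
    simp only [hw']
    split_ifs
    · exact le_rfl
    · exact mul_nonneg (div_nonneg (add_nonneg (s0 _) (s0 _)) zero_le_two)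
        (mul_pos (hd _) (hd _)).le
  -- the value of the map at `none` is arbitrary: it only has to cover the edges
  · have hsub : {p : Sym2 (Fin n) | ∃ u v, p = s(u, v) ∧ 0 < w' u v} ⊆
        Set.image
          (fun o : Option (Fin n × Fin n) => o.elim s(⟨0, hn⟩, ⟨0, hn⟩) fun p => s(p.1, p.2))
          {i | s i ≠ 0} := by
      rintro p ⟨u, v, rfl, huv⟩
      by_cases h1 : s (some (u, v)) = 0
      · by_cases h2 : s (some (v, u)) = 0
        · simp [hw', h1, h2] at huv
        · exact ⟨some (v, u), h2, Sym2.eq_swap⟩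
      · exact ⟨some (u, v), h1, rfl⟩
    have h1 := Set.ncard_le_ncard hsub (Set.toFinite _)
    have h2 := (h1.trans (Set.ncard_image_le (Set.toFinite _))).trans sc
    exact_mod_cast h2
  · refine PosSemidef.of_dotProduct_mulVec_nonneg
      (hLw.sub (hLw'.smul (IsSelfAdjoint.all _))) fun x => ?_
    rw [star_trivial, sub_mulVec, dotProduct_sub, smul_mulVec, dotProduct_smul, smul_eq_mul]
    linarith [(key x).1]
  · refine PosSemidef.of_dotProduct_mulVec_nonneg
      ((hLw'.smul (IsSelfAdjoint.all _)).sub hLw) fun x => ?_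
    rw [star_trivial, sub_mulVec, dotProduct_sub, smul_mulVec, dotProduct_smul, smul_eq_mul]
    linarith [(key x).2]
end

section
/- For every real number κ ≥ 1 and every real number ε with 0 < ε ≤ 1/2, there exists a real polynomial p of degree at most ⌈√κ · log(2/ε)⌉ such that |1 − λ·p(λ)| ≤ ε for all λ ∈ [1/κ, 1]. -/
/-!
The residual `q = 1 - X * p` may be any polynomial with `q 0 = 1`
(`exists_eq_one_sub_mul`), so it suffices to find such a `q` of degree `n = ⌈√κ log (2/ε)⌉`
that is at most `ε` in absolute value on `[1/κ, 1]`. Take `q = T_n ∘ L / T_n (L 0)`, where `L`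
is the affine map carrying `[1/κ, 1]` onto `[-1, 1]` and `T_n` is the Chebyshev polynomial.
The numerator is bounded by `1` on the interval, while `L 0 = (κ + 1) / (κ - 1)` lies outside
`[-1, 1]`, where `T_n` is so large that `T_n (L 0) ≥ exp (n / √κ) / 2 ≥ 1 / ε`
(`exp_div_two_le_eval_T`).
-/

open Polynomial Real in
/-- Dividing `q - 1` by `X` writes a residual polynomial as `1 - X * p`, without raising the
degree. -/
lemma exists_eq_one_sub_mul (q : ℝ[X]) (hq : q.eval 0 = 1) :
    ∃ p : ℝ[X], p.natDegree ≤ q.natDegree ∧ ∀ x, 1 - x * p.eval x = q.eval x := by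
  refine ⟨-q.divX, ?_, fun x => ?_⟩
  · rw [natDegree_neg, natDegree_divX_eq_natDegree_tsub_one]
    exact Nat.sub_le _ _
  · have h := congrArg (Polynomial.eval x) q.divX_mul_X_add
    rw [coeff_zero_eq_eval_zero, hq] at h
    simp only [eval_add, eval_mul, eval_X, eval_C] at h
    rw [eval_neg, ← h]
    ring

open Polynomial Real in
/-- Growth of `T_n` outside `[-1, 1]`: here `(s² + 1) / (s² - 1) = cosh θ` with
`θ = log ((s + 1) / (s - 1)) ≥ 1 / s`, so the value is at least `exp (n / s) / 2`. -/
lemma exp_div_two_le_eval_T (n : ℕ) {s : ℝ} (hs : 1 < s) :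
    exp (n / s) / 2 ≤ (Chebyshev.T ℝ n).eval ((s ^ 2 + 1) / (s ^ 2 - 1)) := by
  have h1 : 0 < s - 1 := by linarith
  have h2 : 0 < s + 1 := by linarith
  have h3 : s ^ 2 - 1 ≠ 0 := by nlinarith
  have hy : 0 < (s + 1) / (s - 1) := by positivity
  have hc : cosh (log ((s + 1) / (s - 1))) = (s ^ 2 + 1) / (s ^ 2 - 1) := by
    rw [cosh_log hy]
    field_simp
    ring
  have hθ : 1 / s ≤ log ((s + 1) / (s - 1)) := by
    refine le_trans ?_ (one_sub_inv_le_log_of_pos hy)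
    have : 1 - ((s + 1) / (s - 1))⁻¹ = 2 / (s + 1) := by
      field_simp
      ring
    rw [this, div_le_div_iff₀ (by linarith) h2]
    linarith
  rw [← hc, Chebyshev.T_real_cosh, cosh_eq]
  have hn : (n : ℝ) / s ≤ ((n : ℤ) : ℝ) * log ((s + 1) / (s - 1)) := by
    rw [Int.cast_natCast, div_eq_mul_one_div]
    gcongr
  have := exp_le_exp.mpr hn
  have := exp_pos (-(((n : ℤ) : ℝ) * log ((s + 1) / (s - 1))))
  linarith

open Polynomial Real in
/-- Polynomial approximation underlying preconditioned Chebyshev iteration: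
for `κ ≥ 1` and `0 < ε ≤ 1/2` there is a real polynomial `p` of degree at most
`⌈√κ · log(2/ε)⌉` with `|1 − λ·p(λ)| ≤ ε` for all `λ ∈ [1/κ, 1]`. -/
theorem chebyshev_inverse_approx (κ : ℝ) (hκ : 1 ≤ κ)
    (ε : ℝ) (hε0 : 0 < ε) (hε1 : ε ≤ 1 / 2) :
    ∃ p : Polynomial ℝ,
      p.natDegree ≤ ⌈Real.sqrt κ * Real.log (2 / ε)⌉₊ ∧
      ∀ x ∈ Set.Icc (1 / κ) 1, |1 - x * p.eval x| ≤ ε := by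
  rcases hκ.eq_or_lt with rfl | hκ
  · -- The interval is the single point `1`, and the rescaling to `[-1, 1]` degenerates.
    refine ⟨1, by simp, fun x hx => ?_⟩
    have : x = 1 := le_antisymm hx.2 (by simpa using hx.1)
    simp [this, hε0.le]
  set n := ⌈√κ * log (2 / ε)⌉₊
  have hs : 1 < √κ := by rw [Real.lt_sqrt] <;> linarith
  have hκ1 : 0 < κ - 1 := by linarith
  set t := (Chebyshev.T ℝ n).eval ((κ + 1) / (κ - 1)) with ht
  have htε : 1 / ε ≤ t := by
    have h := exp_div_two_le_eval_T n hs
    rw [Real.sq_sqrt (by linarith)] at h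
    refine le_trans ?_ h
    have h2 : log (2 / ε) ≤ n / √κ := by
      rw [le_div_iff₀ (by linarith), mul_comm]
      exact Nat.le_ceil _
    have h3 := exp_le_exp.mpr h2
    rw [exp_log (by positivity)] at h3
    calc 1 / ε = (2 / ε) / 2 := by ring
      _ ≤ _ := by linarith
  have ht0 : 0 < t := lt_of_lt_of_le (by positivity) htε
  -- The affine map carrying `[1/κ, 1]` to `[-1, 1]` and `0` to `(κ + 1) / (κ - 1)`.
  set L : ℝ[X] := C (-(2 * κ) / (κ - 1)) * X + C ((κ + 1) / (κ - 1)) with hL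
  obtain ⟨p, hp, hpq⟩ := exists_eq_one_sub_mul (C t⁻¹ * (Chebyshev.T ℝ n).comp L) (by
    simp [hL, eval_comp, ← ht, ht0.ne'])
  refine ⟨p, hp.trans ?_, fun x hx => ?_⟩
  · refine (natDegree_C_mul_le _ _).trans (natDegree_comp_le.trans ?_)
    rw [Chebyshev.natDegree_T]
    calc _ ≤ n * 1 := Nat.mul_le_mul (by simp) natDegree_linear_le
      _ = n := mul_one n
  · have hx1 : 1 ≤ κ * x := by
      have := hx.1
      rwa [div_le_iff₀' (by linarith)] at this
    have hLx : |L.eval x| ≤ 1 := by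
      have : L.eval x = (κ + 1 - 2 * (κ * x)) / (κ - 1) := by
        simp [hL]
        ring
      rw [this, abs_le, le_div_iff₀ hκ1, div_le_iff₀ hκ1]
      constructor <;> nlinarith [hx.2]
    rw [hpq, eval_mul, eval_C, eval_comp, abs_mul, abs_of_pos (inv_pos.mpr ht0)]
    calc t⁻¹ * |(Chebyshev.T ℝ n).eval (L.eval x)| ≤ t⁻¹ * 1 := by
          gcongr
          exact Chebyshev.abs_eval_T_real_le_one n hLx
      _ ≤ ε := by
          rw [mul_one]
          exact inv_le_of_inv_le₀ hε0 (by simpa using htε)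
end
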